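/- arXiv:math/0012187 — 2 statements merged into one kernel-verified Lean document; each statement's English description precedes it below -/
import Mathlib

section
/- Let D be a bounded domain in ℂ and let w ∈ ∂D be a regular boundary point. Then the Azukawa metric blows up at w: A_D(p; 1) → ∞ as D ∋ p → w. -/
open MeasureTheory Filter Topology Metric Set
open scoped ENNReal NNReal

/-- Truncated circle average of an `EReal`-valued function: the average over the circle of
center `c` and radius `R` of the function truncated below at `-n`. -/
noncomputable def circleAvgTrunc (u : ℂ → EReal) (c : ℂ) (R : ℝ) (n : ℕ) : ℝ :=
  (2 * Real.pi)⁻¹ * ∫ θ in (0:ℝ)..(2 * Real.pi),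
    (max (u (c + R * Complex.exp (θ * Complex.I))) (-(n : ℝ) : EReal)).toReal

/-- `u` is subharmonic on `Ω ⊆ ℂ`: values in `[-∞, ∞)`, upper semicontinuous on `Ω`, and for
every closed disc contained in `Ω` the value at the center is at most the mean over the
boundary circle (in the extended sense, via decreasing truncations). -/
def SubharmonicOn (u : ℂ → EReal) (Ω : Set ℂ) : Prop :=
  UpperSemicontinuousOn u Ω ∧ (∀ z ∈ Ω, u z < ⊤) ∧
    ∀ c ∈ Ω, ∀ R : ℝ, 0 < R → Metric.closedBall c R ⊆ Ω →
      u c ≤ ⨅ n : ℕ, (circleAvgTrunc u c R n : EReal)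

/-- `u` is plurisubharmonic on `Ω`: values in `[-∞, ∞)`, upper semicontinuous on `Ω`, and its
restriction to every complex line is subharmonic. -/
def PlurisubharmonicOn {E : Type*} [NormedAddCommGroup E] [NormedSpace ℂ E]
    (u : E → EReal) (Ω : Set E) : Prop :=
  UpperSemicontinuousOn u Ω ∧ (∀ z ∈ Ω, u z < ⊤) ∧
    ∀ a b : E, SubharmonicOn (fun lam : ℂ => u (a + lam • b)) {lam : ℂ | a + lam • b ∈ Ω}

/-- A set `P ⊆ ℂ` is polar. -/
def PolarSet (P : Set ℂ) : Prop :=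
  ∀ z ∈ P, ∃ U : Set ℂ, IsOpen U ∧ IsConnected U ∧ z ∈ U ∧
    ∃ u : ℂ → EReal, SubharmonicOn u U ∧ (∃ x ∈ U, u x ≠ ⊥) ∧ ∀ x ∈ P ∩ U, u x = ⊥

/-- A set `P ⊆ ℂⁿ` is pluripolar. -/
def PluripolarSet {E : Type*} [NormedAddCommGroup E] [NormedSpace ℂ E] (P : Set E) : Prop :=
  ∀ z ∈ P, ∃ U : Set E, IsOpen U ∧ IsConnected U ∧ z ∈ U ∧
    ∃ u : E → EReal, PlurisubharmonicOn u U ∧ (∃ x ∈ U, u x ≠ ⊥) ∧ ∀ x ∈ P ∩ U, u x = ⊥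

/-- A domain `D` is pseudoconvex if `z ↦ -log dist(z, ∂D)` is plurisubharmonic on `D`. -/
def IsPseudoconvex {E : Type*} [NormedAddCommGroup E] [NormedSpace ℂ E] (D : Set E) : Prop :=
  PlurisubharmonicOn (fun z => ((- Real.log (Metric.infDist z Dᶜ) : ℝ) : EReal)) D

/-- The square-integrable holomorphic functions on an open set `Ω`. -/
def L2h {E : Type*} [NormedAddCommGroup E] [NormedSpace ℂ E] [MeasureSpace E]
    (Ω : Set E) : Set (E → ℂ) :=
  {f | DifferentiableOn ℂ f Ω ∧ (∫⁻ z in Ω, (‖f z‖₊ : ℝ≥0∞) ^ 2) < ⊤}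

/-- The Bergman kernel of `Ω` on the diagonal,
`K_Ω(z) = sup { |f(z)|²/‖f‖²_{L²(Ω)} : f ∈ L²ₕ(Ω), f ≢ 0 }`. -/
noncomputable def bergmanKernel {E : Type*} [NormedAddCommGroup E] [NormedSpace ℂ E]
    [MeasureSpace E] (Ω : Set E) (z : E) : ℝ≥0∞ :=
  ⨆ (f : E → ℂ) (_ : f ∈ L2h Ω) (_ : ∃ w ∈ Ω, f w ≠ 0),
    (‖f z‖₊ : ℝ≥0∞) ^ 2 / ∫⁻ w in Ω, (‖f w‖₊ : ℝ≥0∞) ^ 2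

/-- `D` is an `L²ₕ`-domain of holomorphy: there are no domains `D₀, D₁` with
`∅ ≠ D₀ ⊆ D₁ ∩ D`, `D₁ ⊄ D`, such that every `f ∈ L²ₕ(D)` extends holomorphically to `D₁`
(agreeing with `f` on `D₀`). -/
def IsL2hDomainOfHolomorphy {E : Type*} [NormedAddCommGroup E] [NormedSpace ℂ E]
    [MeasureSpace E] (D : Set E) : Prop :=
  ¬ ∃ D0 D1 : Set E, IsOpen D0 ∧ IsConnected D0 ∧ IsOpen D1 ∧ IsConnected D1 ∧
      D0 ⊆ D1 ∩ D ∧ ¬ (D1 ⊆ D) ∧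
      ∀ f ∈ L2h D, ∃ F : E → ℂ, DifferentiableOn ℂ F D1 ∧ Set.EqOn F f D0

/-- `w` is a regular boundary point of the domain `D ⊆ ℂ`. -/
def RegularBoundaryPt (D : Set ℂ) (w : ℂ) : Prop :=
  ∃ U : Set ℂ, IsOpen U ∧ w ∈ U ∧ ∃ u : ℂ → EReal, SubharmonicOn u (U ∩ D) ∧
    (∀ z ∈ U ∩ D, u z < 0) ∧ Tendsto u (𝓝[U ∩ D] w) (𝓝 (0 : EReal))

/-- The (pluricomplex) Green function of a domain `D ⊆ ℂ` with logarithmic pole at `p`. -/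
noncomputable def greenFn (D : Set ℂ) (p z : ℂ) : EReal :=
  sSup {v : EReal | ∃ u : ℂ → EReal, SubharmonicOn u D ∧ (∀ x ∈ D, u x < 0) ∧
    (∃ C : ℝ, ∀ᶠ x in 𝓝 p, u x ≤ ((Real.log ‖x - p‖ + C : ℝ) : EReal)) ∧ v = u z}

/-- A polydisc in `ℂⁿ` with centre `c` and multiradius `r`. -/
def polydisc {n : ℕ} (c : Fin n → ℂ) (r : Fin n → ℝ) : Set (Fin n → ℂ) :=
  {z | ∀ i, ‖z i - c i‖ < r i}

/-- The Azukawa metric of a domain `D ⊆ ℂ` at the vector `X = 1`: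
`A_D(p;1) = limsup_{λ→0} exp(g_D(p, p+λ)) / |λ|`. -/
noncomputable def azukawaOne (D : Set ℂ) (p : ℂ) : ℝ≥0∞ :=
  Filter.limsup
    (fun lam : ℂ => EReal.exp (greenFn D p (p + lam)) / ENNReal.ofReal ‖lam‖)
    (𝓝[≠] (0 : ℂ))

/-!
A function witnessing regularity of `w` is only controlled near `w`. Following Bouligand, one
truncates it to `β` and subtracts from `n β + 1`, with `n` large, a harmonic majorant of its
positive part on a small circle around `w`. The positive part of the difference extends by zero to a
subharmonic function `b` on `D`, with `0 ≤ b ≤ 1`, supported near `w` and close to `1` at `w`.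
If `R` exceeds the diameter of `D`, then `log ‖z - p‖ + L * b z - log R` is a competitor in the
definition of the Green function with pole `p`, provided `p` and the support of `b` are close enough
to `w` in terms of `L`. Hence `azukawaOne D p ≥ exp (L / 2) / R` for `p` near `w`, where `L` is
arbitrary.
-/

theorem measurable_indicator_of_upperSemicontinuousOn {α : Type*} [TopologicalSpace α]
    [MeasurableSpace α] [OpensMeasurableSpace α] {s : Set α} {f : α → ℝ} (hs : MeasurableSet s)
    (hf : UpperSemicontinuousOn f s) : Measurable (s.indicator f) := by
  refine measurable_of_restrict_of_restrict_compl hs ?_ ?_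
  · rw [domRestrict_eq_domRestrict_iff.2 (eqOn_indicator (f := f))]
    exact (upperSemicontinuousOn_iff_restrict.2 hf).measurable
  · rw [domRestrict_eq_domRestrict_iff.2 (eqOn_indicator' (f := f))]
    exact measurable_const

section CircleAverages

variable {f g : ℂ → ℝ} {c : ℂ} {R : ℝ}

theorem circleIntegrable_of_measurable_of_bounded {a b : ℝ} (hf : Measurable f)
    (hbd : ∀ ζ ∈ sphere c |R|, f ζ ∈ Icc a b) : CircleIntegrable f c R := by
  rw [CircleIntegrable, intervalIntegrable_iff]
  refine Measure.integrableOn_of_bounded (M := max |a| |b|) measure_Ioc_lt_top.ne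
    (hf.comp (continuous_circleMap c R).measurable).aestronglyMeasurable (.of_forall fun θ => ?_)
  have hθ := hbd _ (circleMap_mem_sphere' c R θ)
  exact abs_le_max_abs_abs hθ.1 hθ.2

theorem circleIntegrable_of_upperSemicontinuousOn (hf : UpperSemicontinuousOn f (sphere c |R|))
    (hbd : BddBelow (f '' sphere c |R|)) : CircleIntegrable f c R := by
  obtain ⟨b, hb⟩ := hf.bddAbove_of_isCompact (isCompact_sphere c |R|)
  obtain ⟨a, ha⟩ := hbd
  rw [← circleIntegrable_congr (eqOn_indicator (s := sphere c |R|) (f := f))]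
  refine circleIntegrable_of_measurable_of_bounded (a := a) (b := b)
    (measurable_indicator_of_upperSemicontinuousOn isClosed_sphere.measurableSet hf) fun ζ hζ => ?_
  rw [indicator_of_mem hζ]
  exact ⟨ha (mem_image_of_mem f hζ), hb (mem_image_of_mem f hζ)⟩

theorem circleAverage_norm_sq (z : ℂ) (r : ℝ) :
    Real.circleAverage (fun x => ‖x‖ ^ 2) z r = ‖z‖ ^ 2 + r ^ 2 := by
  let ℓ : ℂ → ℝ := fun x => ((starRingEnd ℂ z) * (x - z)).re
  have hℓ : Real.circleAverage ℓ z r = 0 := by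
    have hharm : InnerProductSpace.HarmonicOnNhd ℓ (closedBall z |r|) := fun x _ =>
      (show AnalyticAt ℂ (fun x => (starRingEnd ℂ z) * (x - z)) x by fun_prop).harmonicAt_re
    rw [hharm.circleAverage_eq]
    simp [ℓ]
  have hexpand : EqOn (fun x => ‖x‖ ^ 2) (fun x => (‖z‖ ^ 2 + r ^ 2) + (2 : ℝ) • ℓ x)
      (sphere z |r|) := by
    intro x hx
    have hx : ‖x - z‖ ^ 2 = r ^ 2 := by rw [← dist_eq_norm, mem_sphere.1 hx, sq_abs]
    have hsq : ‖x‖ ^ 2 = ‖z‖ ^ 2 + ‖x - z‖ ^ 2 + 2 * ℓ x := by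
      simp only [ℓ, ← Complex.normSq_eq_norm_sq, Complex.normSq_apply, Complex.mul_re,
        Complex.sub_re, Complex.sub_im, Complex.conj_re, Complex.conj_im]
      ring
    simp only [hsq, hx, smul_eq_mul]
  rw [Real.circleAverage_congr_sphere hexpand, Real.circleAverage_fun_add
    (circleIntegrable_const _ _ _) (ContinuousOn.circleIntegrable' (by fun_prop)),
    Real.circleAverage_const, Real.circleAverage_fun_smul, hℓ, smul_zero, add_zero]

theorem circleAverage_mono_off_countable {s : Set ℂ} (hs : s.Countable) (hR : R ≠ 0)
    (hf : CircleIntegrable f c R) (hg : CircleIntegrable g c R)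
    (hle : ∀ ζ ∈ sphere c |R|, ζ ∉ s → f ζ ≤ g ζ) :
    Real.circleAverage f c R ≤ Real.circleAverage g c R := by
  refine smul_le_smul_of_nonneg_left ?_ (by positivity)
  refine intervalIntegral.integral_mono_ae Real.two_pi_pos.le hf hg ?_
  have hnull : ∀ᵐ θ : ℝ, θ ∉ circleMap c R ⁻¹' s := (hs.preimage_circleMap c hR).ae_notMem _
  filter_upwards [hnull] with θ hθ
  exact hle _ (circleMap_mem_sphere' c R θ) hθ

end CircleAverages

/-- A finite, locally bounded subharmonic function. Being bounded below on compact sets makes the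
circle averages genuine integrals; the sub-mean value inequality is only required on small circles,
and `LocBddSubharmonicOn.le_circleAverage` recovers it on all circles. -/
structure LocBddSubharmonicOn (h : ℂ → ℝ) (S : Set ℂ) : Prop where
  upperSemicontinuousOn : UpperSemicontinuousOn h S
  bddBelow : ∀ K ⊆ S, IsCompact K → BddBelow (h '' K)
  eventually_le_circleAverage : ∀ z ∈ S, ∀ᶠ r in 𝓝[>] (0 : ℝ), h z ≤ Real.circleAverage h z r

theorem eventually_closedBall_abs_subset {S : Set ℂ} (hS : IsOpen S) {z : ℂ} (hz : z ∈ S) :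
    ∀ᶠ r in 𝓝[>] (0 : ℝ), closedBall z |r| ⊆ S := by
  filter_upwards [nhdsWithin_le_nhds (eventually_closedBall_subset (hS.mem_nhds hz)),
    self_mem_nhdsWithin] with r hr (hpos : 0 < r)
  rwa [abs_of_pos hpos]

namespace LocBddSubharmonicOn

variable {h P : ℂ → ℝ} {S T D V : Set ℂ} {c : ℂ} {R a : ℝ}

theorem mono (hh : LocBddSubharmonicOn h S) (hT : T ⊆ S) : LocBddSubharmonicOn h T where
  upperSemicontinuousOn := hh.upperSemicontinuousOn.mono hT
  bddBelow K hK := hh.bddBelow K (hK.trans hT)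
  eventually_le_circleAverage z hz := hh.eventually_le_circleAverage z (hT hz)

theorem circleIntegrable (hh : LocBddSubharmonicOn h S) (hS : sphere c |R| ⊆ S) :
    CircleIntegrable h c R :=
  circleIntegrable_of_upperSemicontinuousOn (hh.upperSemicontinuousOn.mono hS)
    (hh.bddBelow _ hS (isCompact_sphere c |R|))

theorem eventually_circleIntegrable (hh : LocBddSubharmonicOn h S) (hS : IsOpen S) {z : ℂ}
    (hz : z ∈ S) : ∀ᶠ r in 𝓝[>] (0 : ℝ), CircleIntegrable h z r :=
  (eventually_closedBall_abs_subset hS hz).mono fun _ hr =>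
    hh.circleIntegrable (sphere_subset_closedBall.trans hr)

theorem const_mul_add_const (hh : LocBddSubharmonicOn h S) (hS : IsOpen S) (ha : 0 ≤ a) (b : ℝ) :
    LocBddSubharmonicOn (fun z => a * h z + b) S where
  upperSemicontinuousOn := by
    have hcont : Continuous fun t : ℝ => a * t + b := by fun_prop
    exact hcont.comp_upperSemicontinuousOn hh.upperSemicontinuousOn fun s t hst => by dsimp; gcongr
  bddBelow K hK hKc := by
    obtain ⟨m, hm⟩ := hh.bddBelow K hK hKc
    refine ⟨a * m + b, ?_⟩
    rintro _ ⟨z, hz, rfl⟩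
    have := hm (mem_image_of_mem h hz)
    dsimp
    gcongr
  eventually_le_circleAverage z hz := by
    filter_upwards [hh.eventually_le_circleAverage z hz, hh.eventually_circleIntegrable hS hz]
      with r hmean hint
    simp only [← smul_eq_mul]
    rw [Real.circleAverage_fun_add hint.const_fun_smul (circleIntegrable_const _ _ _),
      Real.circleAverage_fun_smul, Real.circleAverage_const]
    gcongr

theorem sub_harmonic (hh : LocBddSubharmonicOn h S) (hS : IsOpen S)
    (hP : InnerProductSpace.HarmonicOnNhd P S) : LocBddSubharmonicOn (fun z => h z - P z) S where
  upperSemicontinuousOn := by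
    simp only [sub_eq_add_neg]
    exact hh.upperSemicontinuousOn.add hP.continuousOn.neg.upperSemicontinuousOn
  bddBelow K hK hKc := by
    obtain ⟨m, hm⟩ := hh.bddBelow K hK hKc
    obtain ⟨M, hM⟩ := hKc.bddAbove_image (hP.continuousOn.mono hK)
    refine ⟨m - M, ?_⟩
    rintro _ ⟨z, hz, rfl⟩
    exact sub_le_sub (hm (mem_image_of_mem h hz)) (hM (mem_image_of_mem P hz))
  eventually_le_circleAverage z hz := by
    filter_upwards [hh.eventually_le_circleAverage z hz, hh.eventually_circleIntegrable hS hz,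
      eventually_closedBall_abs_subset hS hz] with r hmean hint hball
    have hPr := hP.mono hball
    rw [Real.circleAverage_fun_sub hint
      (hPr.continuousOn.mono sphere_subset_closedBall).circleIntegrable', hPr.circleAverage_eq]
    gcongr

theorem max_zero (hh : LocBddSubharmonicOn h S) (hS : IsOpen S) :
    LocBddSubharmonicOn (fun z => max (h z) 0) S where
  upperSemicontinuousOn := hh.upperSemicontinuousOn.sup upperSemicontinuousOn_const
  bddBelow K _ _ := ⟨0, by rintro _ ⟨z, _, rfl⟩; exact le_max_right _ _⟩
  eventually_le_circleAverage z hz := by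
    filter_upwards [hh.eventually_le_circleAverage z hz, eventually_closedBall_abs_subset hS hz]
      with r hmean hball
    have hsph := sphere_subset_closedBall.trans hball
    have hint : CircleIntegrable (fun z => max (h z) 0) z r :=
      circleIntegrable_of_upperSemicontinuousOn
        ((hh.upperSemicontinuousOn.mono hsph).sup upperSemicontinuousOn_const)
        ⟨0, by rintro _ ⟨z, _, rfl⟩; exact le_max_right _ _⟩
    exact max_le
      (hmean.trans (Real.circleAverage_mono (hh.circleIntegrable hsph) hint fun _ _ =>
        le_max_left _ _))
      (Real.circleAverage_nonneg_of_nonneg fun _ _ => le_max_right _ _)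

theorem congr {k : ℂ → ℝ} (hh : LocBddSubharmonicOn h S) (hS : IsOpen S) (hk : EqOn k h S) :
    LocBddSubharmonicOn k S where
  upperSemicontinuousOn := fun z hz =>
    (hh.upperSemicontinuousOn z hz).congr_of_eventuallyEq hz
      (eventually_nhdsWithin_of_forall fun x hx y => by rw [hk hx])
  bddBelow K hK hKc := by
    rw [(hk.mono hK).image_eq]
    exact hh.bddBelow K hK hKc
  eventually_le_circleAverage z hz := by
    filter_upwards [hh.eventually_le_circleAverage z hz, eventually_closedBall_abs_subset hS hz]
      with r hmean hball
    rwa [hk hz, Real.circleAverage_congr_sphere (hk.mono (sphere_subset_closedBall.trans hball))]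

theorem indicator_max_zero (hV : IsOpen V) (hh : LocBddSubharmonicOn h V)
    (hfr : ∀ ζ ∈ D ∩ frontier V, ∀ ε > 0, ∀ᶠ z in 𝓝[V] ζ, h z < ε) :
    LocBddSubharmonicOn (V.indicator fun z => max (h z) 0) D := by
  set k := V.indicator fun z => max (h z) 0
  have hk_nonneg : ∀ z, 0 ≤ k z := fun z => indicator_nonneg (fun x _ => le_max_right _ _) z
  have hk_off : ∀ z ∉ V, k z = 0 := fun z hz => indicator_of_notMem hz _
  have hk : LocBddSubharmonicOn k V := (hh.max_zero hV).congr hV eqOn_indicator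
  have hsmall : ∀ z ∈ D \ V, ∀ ε > 0, ∀ᶠ x in 𝓝[V] z, h x < ε := by
    intro z hz ε hε
    by_cases hcl : z ∈ closure V
    · exact hfr z ⟨hz.1, hV.frontier_eq ▸ ⟨hcl, hz.2⟩⟩ ε hε
    · rw [notMem_closure_iff_nhdsWithin_eq_bot.1 hcl]
      exact eventually_bot
  refine ⟨fun z hz => ?_, fun K _ _ => ⟨0, ?_⟩, fun z _ => ?_⟩
  · intro ε hε
    refine nhdsWithin_le_nhds ?_
    by_cases hzV : z ∈ V
    · rw [← hV.nhdsWithin_eq hzV]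
      exact hk.upperSemicontinuousOn z hzV ε hε
    · rw [hk_off z hzV] at hε
      filter_upwards [eventually_nhdsWithin_iff.1 (hsmall z ⟨hz, hzV⟩ ε hε)] with x hx
      by_cases hxV : x ∈ V
      · simpa only [k, indicator_of_mem hxV] using max_lt (hx hxV) hε
      · rwa [hk_off x hxV]
  · rintro _ ⟨z, -, rfl⟩
    exact hk_nonneg z
  · by_cases hzV : z ∈ V
    · exact hk.eventually_le_circleAverage z hzV
    · rw [hk_off z hzV]
      exact .of_forall fun r => Real.circleAverage_nonneg_of_nonneg fun x _ => hk_nonneg x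

theorem not_isMaxOn_add_mul_norm_sq (hh : LocBddSubharmonicOn h S) (hS : IsOpen S) {η : ℝ}
    (hη : 0 < η) {z : ℂ} (hz : z ∈ S) : ¬ IsMaxOn (fun x => h x + η * ‖x‖ ^ 2) S z := by
  intro hmax
  obtain ⟨r, hmean, hball, (hr : 0 < r)⟩ := ((hh.eventually_le_circleAverage z hz).and
    ((eventually_closedBall_abs_subset hS hz).and self_mem_nhdsWithin)).exists
  have hsph := sphere_subset_closedBall.trans hball
  have hint := hh.circleIntegrable hsph
  have hint' : CircleIntegrable (fun x : ℂ => η • ‖x‖ ^ 2) z r :=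
    ContinuousOn.circleIntegrable' (by fun_prop)
  have hle := Real.circleAverage_mono_on_of_le_circle (hint.add hint') fun x hx => hmax (hsph hx)
  rw [Real.circleAverage_add hint hint', Real.circleAverage_fun_smul, circleAverage_norm_sq,
    smul_eq_mul] at hle
  have : 0 < η * r ^ 2 := by positivity
  linarith

theorem nonpos_of_eqOn_zero {Ω : Set ℂ} (hh : LocBddSubharmonicOn h univ)
    (hΩ : Bornology.IsBounded Ω) (hzero : EqOn h 0 Ωᶜ) (z : ℂ) : h z ≤ 0 := by
  obtain ⟨R, hR, hΩR⟩ := hΩ.subset_ball_lt 0 0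
  by_cases hz : z ∈ Ω
  swap
  · exact (hzero hz).le
  have hquad : ∀ η > 0, h z ≤ η * R ^ 2 := by
    intro η hη
    have husc : UpperSemicontinuousOn (fun x => h x + η * ‖x‖ ^ 2) (closedBall 0 R) :=
      (hh.upperSemicontinuousOn.mono (subset_univ _)).add
        (Continuous.continuousOn (by fun_prop)).upperSemicontinuousOn
    obtain ⟨ζ, hζ, hmax⟩ := husc.exists_isMaxOn ⟨0, by simpa using hR.le⟩ (isCompact_closedBall 0 R)
    have hζΩ : ζ ∉ ball 0 R := fun hζ => (hh.mono (subset_univ _)).not_isMaxOn_add_mul_norm_sq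
      isOpen_ball hη hζ (hmax.on_subset ball_subset_closedBall)
    have hle : h z + η * ‖z‖ ^ 2 ≤ h ζ + η * ‖ζ‖ ^ 2 := hmax (ball_subset_closedBall (hΩR hz))
    rw [hzero fun hζ => hζΩ (hΩR hζ), Pi.zero_apply, zero_add] at hle
    calc h z ≤ h z + η * ‖z‖ ^ 2 := le_add_of_nonneg_right (by positivity)
      _ ≤ η * ‖ζ‖ ^ 2 := hle
      _ ≤ η * R ^ 2 := by gcongr; simpa using hζ
  refine le_of_forall_pos_le_add fun ε hε => ?_
  calc h z ≤ ε / R ^ 2 * R ^ 2 := hquad _ (by positivity)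
    _ = 0 + ε := by field_simp; ring

theorem nonpos_of_frontier {Ω : Set ℂ} (hΩ : IsOpen Ω) (hbd : Bornology.IsBounded Ω)
    (hh : LocBddSubharmonicOn h Ω) (hfr : ∀ ζ ∈ frontier Ω, ∀ ε > 0, ∀ᶠ z in 𝓝[Ω] ζ, h z < ε)
    {z : ℂ} (hz : z ∈ Ω) : h z ≤ 0 := by
  have hglue : LocBddSubharmonicOn (Ω.indicator fun z => max (h z) 0) univ :=
    hh.indicator_max_zero hΩ fun ζ hζ => hfr ζ hζ.2
  have hle := hglue.nonpos_of_eqOn_zero hbd (fun x hx => indicator_of_notMem hx _) z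
  rw [indicator_of_mem hz] at hle
  exact (le_max_left _ _).trans hle

end LocBddSubharmonicOn

/-- The Poisson integral of boundary values `g` on the circle of centre `c` and radius `R`. -/
noncomputable def poissonIntegral (g : ℂ → ℝ) (c : ℂ) (R : ℝ) (z : ℂ) : ℝ :=
  Real.circleAverage (poissonKernel c z • g) c R

section Poisson

variable {g : ℂ → ℝ} {c z ζ : ℂ} {R a t : ℝ}

theorem continuousOn_poissonKernel_sphere (hz : z ∈ ball c R) :
    ContinuousOn (poissonKernel c z) (sphere c |R|) := by
  rw [poissonKernel_eq_re_herglotzRieszKernel]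
  exact Complex.continuous_re.comp_continuousOn (continuousOn_herglotzRieszKernel_sphere hz)

theorem circleAverage_poissonKernel (hz : z ∈ ball c R) :
    Real.circleAverage (poissonKernel c z) c R = 1 := by
  have hconst : InnerProductSpace.HarmonicOnNhd (fun _ => (1 : ℝ)) (closedBall c R) :=
    fun _ _ => InnerProductSpace.harmonicAt_const 1
  rw [← hconst.circleAverage_poissonKernel_smul hz]
  congr 1
  ext ζ
  simp

theorem poissonKernel_of_mem_sphere (hζ : ζ ∈ sphere c R) :
    poissonKernel c z ζ = (R ^ 2 - ‖z - c‖ ^ 2) / ‖ζ - z‖ ^ 2 := by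
  rw [poissonKernel_def, sub_sub_sub_cancel_right, mem_sphere_iff_norm.1 hζ]

theorem poissonKernel_nonneg (hz : z ∈ ball c R) (hζ : ζ ∈ sphere c R) :
    0 ≤ poissonKernel c z ζ := by
  rw [poissonKernel_of_mem_sphere hζ]
  have : ‖z - c‖ < R := mem_ball_iff_norm.1 hz
  exact div_nonneg (sub_nonneg.2 (by gcongr)) (by positivity)

theorem circleIntegrable_poissonKernel_smul (hg : CircleIntegrable g c R) (hz : z ∈ ball c R) :
    CircleIntegrable (poissonKernel c z • g) c R :=
  IntervalIntegrable.continuousOn_mul hg <|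
    (continuousOn_poissonKernel_sphere hz).comp (continuous_circleMap c R).continuousOn
      fun θ _ => circleMap_mem_sphere' c R θ

theorem poissonIntegral_center (hR : 0 < R) :
    poissonIntegral g c R c = Real.circleAverage g c R := by
  refine Real.circleAverage_congr_sphere fun ζ hζ => ?_
  rw [abs_of_pos hR] at hζ
  have : poissonKernel c c ζ = 1 := by
    rw [poissonKernel_of_mem_sphere hζ, mem_sphere_iff_norm.1 hζ]
    simp [hR.ne']
  simp [this]

theorem le_poissonIntegral (hg : CircleIntegrable g c R) (hz : z ∈ ball c R)
    (ha : ∀ ζ ∈ sphere c R, a ≤ g ζ) : a ≤ poissonIntegral g c R z := by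
  have hR : |R| = R := abs_of_pos (pos_of_mem_ball hz)
  have hK := continuousOn_poissonKernel_sphere hz
  calc a = Real.circleAverage (fun ζ => a • poissonKernel c z ζ) c R := by
        rw [Real.circleAverage_fun_smul, circleAverage_poissonKernel hz, smul_eq_mul, mul_one]
    _ ≤ poissonIntegral g c R z := by
        refine Real.circleAverage_mono hK.circleIntegrable'.const_fun_smul
          (circleIntegrable_poissonKernel_smul hg hz) fun ζ hζ => ?_
        rw [hR] at hζ
        rw [smul_eq_mul, mul_comm]
        exact mul_le_mul_of_nonneg_left (ha ζ hζ) (poissonKernel_nonneg hz hζ)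

theorem harmonicOnNhd_poissonIntegral (hg : CircleIntegrable g c R) :
    InnerProductSpace.HarmonicOnNhd (poissonIntegral g c R) (ball c R) := by
  have hg₀ : CircleIntegrable (fun ζ => g (ζ + c)) 0 R := by
    simpa [CircleIntegrable, circleMap, add_comm] using hg
  let H : ℂ → ℂ := fun z =>
    Real.circleAverage (fun ζ => herglotzRieszKernel 0 z ζ • (g (ζ + c) : ℂ)) 0 R
  have hH : AnalyticOnNhd ℂ H (ball 0 R) := by
    refine analyticOnNhd_circleAverage_herglotzRieszKernel_smul ?_
    simp only [CircleIntegrable, intervalIntegrable_iff] at hg₀ ⊢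
    exact Complex.ofRealCLM.integrable_comp hg₀
  have hre : ∀ z ∈ ball c R, poissonIntegral g c R z = (H (z - c)).re := by
    intro z hz
    have hz₀ : z - c ∈ ball 0 R := by simpa [dist_eq_norm] using hz
    rw [poissonIntegral, ← Real.circleAverage_map_add_const,
      re_circleAverage_herglotzRieszKernel_smul hg₀ hz₀]
    congr 1
    ext ζ
    simp [poissonKernel_eq_re_herglotzRieszKernel, herglotzRieszKernel_add_const]
  intro z hz
  have hz₀ : z - c ∈ ball 0 R := by simpa [dist_eq_norm] using hz
  have hHz : AnalyticAt ℂ (fun z => H (z - c)) z :=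
    (hH (z - c) hz₀).fun_comp (f := fun z => z - c) (by fun_prop)
  refine (InnerProductSpace.harmonicAt_congr_nhds ?_).2 hHz.harmonicAt_re
  exact eventually_of_mem (isOpen_ball.mem_nhds hz) hre

theorem sub_le_poissonIntegral {δ : ℝ} (hg : CircleIntegrable g c R) (hz : z ∈ ball c R)
    (hδ : 0 < δ) (ha : ∀ ζ ∈ sphere c R, a ≤ g ζ)
    (ht : ∀ ζ ∈ sphere c R, dist ζ z < δ → t ≤ g ζ) :
    t - |t - a| * ((R ^ 2 - ‖z - c‖ ^ 2) / δ ^ 2) ≤ poissonIntegral g c R z := by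
  have hR : |R| = R := abs_of_pos (pos_of_mem_ball hz)
  have hzR : ‖z - c‖ ^ 2 ≤ R ^ 2 := by have := mem_ball_iff_norm.1 hz; gcongr
  have hK := (continuousOn_poissonKernel_sphere hz).circleIntegrable'
  set m := (R ^ 2 - ‖z - c‖ ^ 2) / δ ^ 2
  have hm : 0 ≤ m := div_nonneg (sub_nonneg.2 hzR) (by positivity)
  calc t - |t - a| * m
      = Real.circleAverage (fun ζ => t • poissonKernel c z ζ - |t - a| * m) c R := by
        rw [Real.circleAverage_fun_sub hK.const_fun_smul (circleIntegrable_const _ _ _),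
          Real.circleAverage_fun_smul, circleAverage_poissonKernel hz, Real.circleAverage_const,
          smul_eq_mul, mul_one]
    _ ≤ poissonIntegral g c R z := by
        refine Real.circleAverage_mono (hK.const_fun_smul.sub (circleIntegrable_const _ _ _))
          (circleIntegrable_poissonKernel_smul hg hz) fun ζ hζ => ?_
        rw [hR] at hζ
        have hK_nonneg := poissonKernel_nonneg hz hζ
        change t * poissonKernel c z ζ - |t - a| * m ≤ poissonKernel c z ζ * g ζ
        rcases lt_or_ge (dist ζ z) δ with hnear | hfar
        · nlinarith [mul_le_mul_of_nonneg_left (ht ζ hζ hnear) hK_nonneg,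
            mul_nonneg (abs_nonneg (t - a)) hm]
        · have hKm : poissonKernel c z ζ ≤ m := by
            rw [poissonKernel_of_mem_sphere hζ]
            rw [dist_eq_norm] at hfar
            exact div_le_div_of_nonneg_left (sub_nonneg.2 hzR) (by positivity) (by gcongr)
          have hta : t - g ζ ≤ |t - a| := (sub_le_sub_left (ha ζ hζ) t).trans (le_abs_self _)
          nlinarith [mul_le_mul_of_nonneg_left hta hK_nonneg,
            mul_le_mul_of_nonneg_left hKm (abs_nonneg (t - a))]

theorem eventually_lt_poissonIntegral (hg : CircleIntegrable g c R)
    (ha : ∀ ζ ∈ sphere c R, a ≤ g ζ) (hζ : ζ ∈ sphere c R) (hlsc : LowerSemicontinuousAt g ζ)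
    (ht : t < g ζ) : ∀ᶠ z in 𝓝[ball c R] ζ, t < poissonIntegral g c R z := by
  obtain ⟨s, hts, hsg⟩ := exists_between ht
  obtain ⟨δ, hδ, hnear⟩ := Metric.eventually_nhds_iff.1 (hlsc s hsg)
  have hlim : Tendsto (fun z : ℂ => s - |s - a| * ((R ^ 2 - ‖z - c‖ ^ 2) / (δ / 2) ^ 2))
      (𝓝 ζ) (𝓝 s) := by
    refine (Continuous.tendsto' (by fun_prop) ζ s ?_)
    simp [mem_sphere_iff_norm.1 hζ]
  filter_upwards [nhdsWithin_le_nhds (hlim.eventually_const_lt hts), self_mem_nhdsWithin,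
    mem_nhdsWithin_of_mem_nhds (ball_mem_nhds ζ (half_pos hδ))] with z hlt hz hzζ
  refine hlt.trans_le (sub_le_poissonIntegral hg hz (half_pos hδ) ha fun x _ hx => ?_)
  have hxζ : dist x ζ < δ := by linarith [dist_triangle x z ζ, mem_ball.1 hzζ]
  exact (hnear hxζ).le

end Poisson

section VitaliCaratheodory

variable {c : ℂ} {R ε : ℝ}

theorem exists_upperSemicontinuous_le_circleAverage {φ : ℂ → ℝ≥0} (hφ : Measurable φ)
    (hint : CircleIntegrable (fun ζ => (φ ζ : ℝ)) c R) (hε : 0 < ε) :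
    ∃ ψ : ℂ → ℝ≥0, ψ ≤ φ ∧ UpperSemicontinuous ψ ∧ CircleIntegrable (fun ζ => (ψ ζ : ℝ)) c R ∧
      Real.circleAverage (fun ζ => (φ ζ : ℝ)) c R - ε ≤
        Real.circleAverage (fun ζ => (ψ ζ : ℝ)) c R := by
  have hmap : Measurable (circleMap c R) := (continuous_circleMap c R).measurable
  set μ : Measure ℂ := Measure.map (circleMap c R) (volume.restrict (Ioc 0 (2 * Real.pi)))
  have hint_iff : ∀ {f : ℂ → ℝ}, Measurable f → (CircleIntegrable f c R ↔ Integrable f μ) := by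
    intro f hf
    rw [integrable_map_measure hf.aestronglyMeasurable hmap.aemeasurable, CircleIntegrable,
      intervalIntegrable_iff, uIoc_of_le Real.two_pi_pos.le, IntegrableOn]
    rfl
  have havg : ∀ {f : ℂ → ℝ}, Measurable f →
      Real.circleAverage f c R = (2 * Real.pi)⁻¹ * ∫ ζ, f ζ ∂μ := by
    intro f hf
    rw [integral_map hmap.aemeasurable hf.aestronglyMeasurable, Real.circleAverage,
      intervalIntegral.integral_of_le Real.two_pi_pos.le, smul_eq_mul]
  obtain ⟨ψ, hψφ, hψ, hψint, hle⟩ := exists_upperSemicontinuous_le_integral_le φ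
    ((hint_iff hφ.coe_nnreal_real).1 hint) (mul_pos Real.two_pi_pos hε)
  have hψm := hψ.measurable.coe_nnreal_real
  refine ⟨ψ, hψφ, hψ, (hint_iff hψm).2 hψint, ?_⟩
  rw [havg hφ.coe_nnreal_real, havg hψm]
  calc (2 * Real.pi)⁻¹ * ∫ ζ, (φ ζ : ℝ) ∂μ - ε
      = (2 * Real.pi)⁻¹ * (∫ ζ, (φ ζ : ℝ) ∂μ - 2 * Real.pi * ε) := by
        have := Real.two_pi_pos.ne'
        field_simp
    _ ≤ (2 * Real.pi)⁻¹ * ∫ ζ, (ψ ζ : ℝ) ∂μ := by gcongr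

theorem exists_lowerSemicontinuous_circleAverage_le {f : ℂ → ℝ} {a b : ℝ} (hf : Measurable f)
    (hbd : ∀ ζ ∈ sphere c |R|, f ζ ∈ Icc a b) (hε : 0 < ε) :
    ∃ g : ℂ → ℝ, LowerSemicontinuous g ∧ CircleIntegrable g c R ∧
      (∀ ζ ∈ sphere c |R|, f ζ ≤ g ζ) ∧
      Real.circleAverage g c R ≤ Real.circleAverage f c R + ε := by
  have hfint : CircleIntegrable f c R := circleIntegrable_of_measurable_of_bounded hf hbd
  have hbint : CircleIntegrable (fun _ => b) c R := circleIntegrable_const _ _ _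
  let φ : ℂ → ℝ≥0 := fun ζ => (b - f ζ).toNNReal
  have hφ : EqOn (fun ζ => (φ ζ : ℝ)) (fun ζ => b - f ζ) (sphere c |R|) := fun ζ hζ =>
    Real.coe_toNNReal _ (sub_nonneg.2 (hbd ζ hζ).2)
  obtain ⟨ψ, hψφ, hψ, hψint, havg⟩ := exists_upperSemicontinuous_le_circleAverage (φ := φ)
    (measurable_const.sub hf).real_toNNReal
    ((circleIntegrable_congr hφ).2 (hbint.sub hfint)) hε
  refine ⟨fun ζ => b - ψ ζ, ?_, hbint.sub hψint, fun ζ hζ => ?_, ?_⟩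
  · exact (show Continuous fun t : ℝ≥0 => b - t by fun_prop).comp_upperSemicontinuous_antitone hψ
      fun s t hst => sub_le_sub_left (NNReal.coe_le_coe.2 hst) b
  · have : (ψ ζ : ℝ) ≤ b - f ζ := (NNReal.coe_le_coe.2 (hψφ ζ)).trans_eq (hφ hζ)
    linarith
  · rw [Real.circleAverage_congr_sphere hφ, Real.circleAverage_fun_sub hbint hfint] at havg
    rw [Real.circleAverage_fun_sub hbint hψint]
    linarith

theorem exists_harmonic_majorant {f : ℂ → ℝ} {a b : ℝ} (hR : 0 < R) (hf : Measurable f)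
    (hbd : ∀ ζ ∈ sphere c R, f ζ ∈ Icc a b) (hε : 0 < ε) :
    ∃ P : ℂ → ℝ, InnerProductSpace.HarmonicOnNhd P (ball c R) ∧
      P c ≤ Real.circleAverage f c R + ε ∧ (∀ z ∈ ball c R, a ≤ P z) ∧
      ∀ ζ ∈ sphere c R, ∀ t < f ζ, ∀ᶠ z in 𝓝[ball c R] ζ, t < P z := by
  obtain ⟨g, hlsc, hg, hfg, havg⟩ := exists_lowerSemicontinuous_circleAverage_le hf
    (by rwa [abs_of_pos hR]) hε
  rw [abs_of_pos hR] at hfg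
  have hag : ∀ ζ ∈ sphere c R, a ≤ g ζ := fun ζ hζ => (hbd ζ hζ).1.trans (hfg ζ hζ)
  refine ⟨poissonIntegral g c R, harmonicOnNhd_poissonIntegral hg, ?_,
    fun z hz => le_poissonIntegral hg hz hag, fun ζ hζ t ht => ?_⟩
  · rwa [poissonIntegral_center hR]
  · exact eventually_lt_poissonIntegral hg hag hζ (hlsc ζ) (ht.trans_le (hfg ζ hζ))

end VitaliCaratheodory

theorem LocBddSubharmonicOn.le_circleAverage {h : ℂ → ℝ} {S : Set ℂ} {c : ℂ} {R : ℝ}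
    (hh : LocBddSubharmonicOn h S) (hS : IsOpen S) (hR : 0 < R) (hball : closedBall c R ⊆ S) :
    h c ≤ Real.circleAverage h c R := by
  have hsph : sphere c R ⊆ S := sphere_subset_closedBall.trans hball
  obtain ⟨a, ha⟩ := hh.bddBelow _ hsph (isCompact_sphere c R)
  obtain ⟨b, hb⟩ := (hh.upperSemicontinuousOn.mono hsph).bddAbove_of_isCompact
    (isCompact_sphere c R)
  have hind : ∀ ζ ∈ sphere c R, S.indicator h ζ = h ζ := fun ζ hζ => indicator_of_mem (hsph hζ) h
  refine le_of_forall_pos_le_add fun ε hε => ?_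
  obtain ⟨P, hP, hPc, -, hPbd⟩ := exists_harmonic_majorant (a := a) (b := b) hR
    (measurable_indicator_of_upperSemicontinuousOn hS.measurableSet hh.upperSemicontinuousOn)
    (fun ζ hζ => by
      rw [hind ζ hζ]
      exact ⟨ha (mem_image_of_mem h hζ), hb (mem_image_of_mem h hζ)⟩) hε
  have hsub : LocBddSubharmonicOn (fun z => h z - P z) (ball c R) :=
    (hh.mono (ball_subset_closedBall.trans hball)).sub_harmonic isOpen_ball hP
  have hle : h c - P c ≤ 0 := by
    refine hsub.nonpos_of_frontier isOpen_ball isBounded_ball (fun ζ hζ δ hδ => ?_)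
      (mem_ball_self hR)
    rw [frontier_ball c hR.ne'] at hζ
    have husc : ∀ᶠ z in 𝓝[ball c R] ζ, h z < h ζ + δ / 2 :=
      (hh.upperSemicontinuousOn ζ (hsph hζ)).mono (ball_subset_closedBall.trans hball) _
        (by linarith)
    filter_upwards [husc, hPbd ζ hζ (h ζ - δ / 2) (by rw [hind ζ hζ]; linarith)] with z hz hPz
    linarith
  have havg : Real.circleAverage (S.indicator h) c R = Real.circleAverage h c R :=
    Real.circleAverage_congr_sphere (by rwa [abs_of_pos hR])
  linarith

section Truncation

variable {u : ℂ → EReal} {S Ω : Set ℂ} {c : ℂ} {R : ℝ}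

theorem coe_toReal_max {x : EReal} (hx : x < ⊤) (a : ℝ) : ((max x a).toReal : EReal) = max x a :=
  EReal.coe_toReal (max_lt hx (EReal.coe_lt_top a)).ne
    ((EReal.bot_lt_coe a).trans_le (le_max_right _ _)).ne'

theorem le_toReal_max {x : EReal} (hx : x < ⊤) (a : ℝ) : a ≤ (max x a).toReal := by
  rw [← EReal.coe_le_coe_iff, coe_toReal_max hx]
  exact le_max_right _ _

theorem upperSemicontinuousOn_toReal_max (hu : UpperSemicontinuousOn u S) (htop : ∀ z ∈ S, u z < ⊤)
    (a : ℝ) : UpperSemicontinuousOn (fun z => (max (u z) a).toReal) S := by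
  intro z hz y hy
  rw [← EReal.coe_lt_coe_iff, coe_toReal_max (htop z hz)] at hy
  filter_upwards [(hu.sup upperSemicontinuousOn_const) z hz y hy, self_mem_nhdsWithin]
    with x hx hxS
  rwa [← EReal.coe_lt_coe_iff, coe_toReal_max (htop x hxS)]

theorem circleIntegrable_toReal_max (hu : UpperSemicontinuousOn u S) (htop : ∀ z ∈ S, u z < ⊤)
    (hS : sphere c |R| ⊆ S) (a : ℝ) : CircleIntegrable (fun z => (max (u z) a).toReal) c R :=
  circleIntegrable_of_upperSemicontinuousOn ((upperSemicontinuousOn_toReal_max hu htop a).mono hS)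
    ⟨a, by rintro _ ⟨z, hz, rfl⟩; exact le_toReal_max (htop z (hS hz)) a⟩

theorem circleAvgTrunc_eq_circleAverage (u : ℂ → EReal) (c : ℂ) (R : ℝ) (n : ℕ) :
    circleAvgTrunc u c R n =
      Real.circleAverage (fun z => (max (u z) ((-n : ℝ) : EReal)).toReal) c R := by
  simp [circleAvgTrunc, Real.circleAverage, circleMap]

theorem SubharmonicOn.locBddSubharmonicOn_toReal_max (hu : SubharmonicOn u Ω) (hΩ : IsOpen Ω)
    (a : ℝ) : LocBddSubharmonicOn (fun z => (max (u z) a).toReal) Ω := by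
  obtain ⟨husc, htop, hmean⟩ := hu
  refine ⟨upperSemicontinuousOn_toReal_max husc htop a, fun K hK _ => ⟨a, ?_⟩, fun z hz => ?_⟩
  · rintro _ ⟨z, hz, rfl⟩
    exact le_toReal_max (htop z (hK hz)) a
  filter_upwards [eventually_closedBall_abs_subset hΩ hz, self_mem_nhdsWithin]
    with r hball (hr : 0 < r)
  have hsph := sphere_subset_closedBall.trans hball
  rw [abs_of_pos hr] at hball
  have hint := fun b : ℝ => circleIntegrable_toReal_max husc htop hsph b
  obtain ⟨n, hn⟩ := exists_nat_ge (-a)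
  have hu_le : u z ≤ ((Real.circleAverage (fun z => (max (u z) a).toReal) z r : ℝ) : EReal) := by
    refine (hmean z hz r hr hball).trans ((iInf_le _ n).trans ?_)
    rw [circleAvgTrunc_eq_circleAverage, EReal.coe_le_coe_iff]
    refine Real.circleAverage_mono (hint _) (hint _) fun ζ hζ => ?_
    rw [← EReal.coe_le_coe_iff, coe_toReal_max (htop ζ (hsph hζ)),
      coe_toReal_max (htop ζ (hsph hζ))]
    exact max_le_max_left _ (EReal.coe_le_coe_iff.2 (neg_le.1 hn))
  have ha_le : a ≤ Real.circleAverage (fun z => (max (u z) a).toReal) z r :=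
    (Real.circleAverage_const a z r).ge.trans <|
      Real.circleAverage_mono (circleIntegrable_const a z r) (hint a) fun ζ hζ =>
        le_toReal_max (htop ζ (hsph hζ)) a
  rw [← EReal.coe_le_coe_iff, coe_toReal_max (htop z hz)]
  exact max_le hu_le (EReal.coe_le_coe_iff.2 ha_le)

end Truncation

section LogarithmicPole

variable {h : ℂ → ℝ} {D : Set ℂ} {p z : ℂ}

theorem log_enorm_sub_add_coe (hz : z ≠ p) (t : ℝ) :
    ENNReal.log ‖z - p‖ₑ + (t : EReal) = ((Real.log ‖z - p‖ + t : ℝ) : EReal) := by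
  rw [← ofReal_norm, ENNReal.log_ofReal_of_pos (norm_pos_iff.2 (sub_ne_zero.2 hz)),
    EReal.coe_add]

theorem log_norm_sub_le_circleAverage {c : ℂ} {R : ℝ} (hc : c ≠ p) (hR : 0 < R) :
    Real.log ‖c - p‖ ≤ Real.circleAverage (fun z => Real.log ‖z - p‖) c R := by
  rw [circleAverage_log_norm_sub_const_eq_log_radius_add_posLog hR.ne']
  calc Real.log ‖c - p‖ = Real.log R + Real.log (R⁻¹ * ‖c - p‖) := by
        rw [Real.log_mul (inv_ne_zero hR.ne') (norm_ne_zero_iff.2 (sub_ne_zero.2 hc)),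
          Real.log_inv]
        ring
    _ ≤ Real.log R + Real.posLog (R⁻¹ * ‖c - p‖) := by gcongr; exact le_max_right _ _

theorem LocBddSubharmonicOn.upperSemicontinuousOn_log_enorm_sub_add
    (hh : LocBddSubharmonicOn h D) (p : ℂ) :
    UpperSemicontinuousOn (fun z => ENNReal.log ‖z - p‖ₑ + (h z : EReal)) D := by
  intro z hz
  have hlog : Continuous fun z : ℂ => ENNReal.log ‖z - p‖ₑ :=
    ENNReal.continuous_log.comp (by fun_prop)
  have hcoe : UpperSemicontinuousOn (fun z => (h z : EReal)) D :=
    continuous_coe_real_ereal.comp_upperSemicontinuousOn hh.upperSemicontinuousOn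
      EReal.coe_strictMono.monotone
  exact hlog.upperSemicontinuous.upperSemicontinuousWithinAt D z |>.add' (hcoe z hz)
    (EReal.continuousAt_add (Or.inr (EReal.coe_ne_bot _)) (Or.inr (EReal.coe_ne_top _)))

theorem LocBddSubharmonicOn.subharmonicOn_log_enorm_sub_add (hh : LocBddSubharmonicOn h D)
    (hD : IsOpen D) (p : ℂ) :
    SubharmonicOn (fun z => ENNReal.log ‖z - p‖ₑ + (h z : EReal)) D := by
  set u : ℂ → EReal := fun z => ENNReal.log ‖z - p‖ₑ + (h z : EReal)
  have hu : ∀ z, z ≠ p → u z = ((Real.log ‖z - p‖ + h z : ℝ) : EReal) := fun z hz =>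
    log_enorm_sub_add_coe hz (h z)
  have hup : u p = ⊥ := by simp [u]
  have htop : ∀ z, u z < ⊤ := fun z => by
    rcases eq_or_ne z p with rfl | hz
    · exact hup ▸ bot_lt_top
    · exact hu z hz ▸ EReal.coe_lt_top _
  have husc : UpperSemicontinuousOn u D := hh.upperSemicontinuousOn_log_enorm_sub_add p
  refine ⟨husc, fun z _ => htop z, fun c _ R hR hball => le_iInf fun n => ?_⟩
  rcases eq_or_ne c p with rfl | hcp
  · rw [hup]
    exact bot_le
  have hsph : sphere c |R| ⊆ D := by
    rw [abs_of_pos hR]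
    exact sphere_subset_closedBall.trans hball
  have hint := hh.circleIntegrable hsph
  have hlog : CircleIntegrable (fun z => Real.log ‖z - p‖) c R :=
    circleIntegrable_log_norm_sub_const R
  rw [hu c hcp, circleAvgTrunc_eq_circleAverage, EReal.coe_le_coe_iff]
  calc Real.log ‖c - p‖ + h c
      ≤ Real.circleAverage (fun z => Real.log ‖z - p‖) c R + Real.circleAverage h c R :=
        add_le_add (log_norm_sub_le_circleAverage hcp hR) (hh.le_circleAverage hD hR hball)
    _ = Real.circleAverage (fun z => Real.log ‖z - p‖ + h z) c R :=
        (Real.circleAverage_fun_add hlog hint).symm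
    _ ≤ Real.circleAverage (fun z => (max (u z) ((-n : ℝ) : EReal)).toReal) c R := by
        refine circleAverage_mono_off_countable (countable_singleton p) hR.ne' (hlog.add hint)
          (circleIntegrable_toReal_max husc (fun z _ => htop z) hsph _) fun ζ _ hζ => ?_
        rw [← EReal.coe_le_coe_iff, coe_toReal_max (htop ζ), ← hu ζ hζ]
        exact le_max_left _ _

end LogarithmicPole

section Barrier

variable {D U S : Set ℂ} {β : ℂ → ℝ} {w : ℂ} {r ε : ℝ}

theorem RegularBoundaryPt.exists_locBddSubharmonicOn (hreg : RegularBoundaryPt D w)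
    (hD : IsOpen D) :
    ∃ U : Set ℂ, IsOpen U ∧ w ∈ U ∧ ∃ β : ℂ → ℝ, LocBddSubharmonicOn β (U ∩ D) ∧
      (∀ z ∈ U ∩ D, β z < 0) ∧ Tendsto β (𝓝[U ∩ D] w) (𝓝 0) := by
  obtain ⟨U, hU, hwU, u, hu, hneg, hlim⟩ := hreg
  have hneg_one : ((-1 : ℝ) : EReal) < 0 := by exact_mod_cast neg_one_lt_zero
  refine ⟨U, hU, hwU, _, hu.locBddSubharmonicOn_toReal_max (hU.inter hD) (-1), fun z hz => ?_, ?_⟩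
  · rw [← EReal.coe_lt_coe_iff, coe_toReal_max (hu.2.1 z hz)]
    exact max_lt (hneg z hz) hneg_one
  · have hmax : Tendsto (fun z => max (u z) ((-1 : ℝ) : EReal)) (𝓝[U ∩ D] w) (𝓝 0) := by
      rw [← max_eq_left hneg_one.le]
      exact hlim.max tendsto_const_nhds
    exact (EReal.tendsto_toReal EReal.zero_ne_top EReal.zero_ne_bot).comp hmax

theorem measurable_indicator_max_const_mul_add_one (hS : MeasurableSet S)
    (hβ : UpperSemicontinuousOn β S) {a : ℝ} (ha : 0 ≤ a) :
    Measurable (S.indicator fun z => max (a * β z + 1) 0) :=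
  measurable_indicator_of_upperSemicontinuousOn hS <|
    (show Continuous fun t : ℝ => max (a * t + 1) 0 by fun_prop).comp_upperSemicontinuousOn hβ
      fun s t hst => by dsimp; gcongr

theorem indicator_max_const_mul_add_one_mem_Icc (hneg : ∀ z ∈ S, β z ≤ 0) {a : ℝ} (ha : 0 ≤ a)
    (z : ℂ) : S.indicator (fun z => max (a * β z + 1) 0) z ∈ Icc 0 1 := by
  refine ⟨indicator_nonneg (fun _ _ => le_max_right _ _) z,
    indicator_apply_le' (fun hz => max_le ?_ zero_le_one) fun _ => zero_le_one⟩
  linarith [mul_nonpos_of_nonneg_of_nonpos ha (hneg z hz)]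

theorem tendsto_circleAverage_indicator_max_const_mul_add_one (hS : MeasurableSet S)
    (hβ : UpperSemicontinuousOn β S) (hneg : ∀ z ∈ S, β z < 0) (c : ℂ) (R : ℝ) :
    Tendsto (fun n : ℕ => Real.circleAverage (S.indicator fun z => max (n * β z + 1) 0) c R)
      atTop (𝓝 0) := by
  have hlim : ∀ z, Tendsto (fun n : ℕ => S.indicator (fun z => max (n * β z + 1) 0) z)
      atTop (𝓝 0) := by
    intro z
    by_cases hz : z ∈ S
    · obtain ⟨N, hN⟩ := exists_nat_ge (-(β z))⁻¹
      refine tendsto_const_nhds.congr' ?_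
      filter_upwards [eventually_ge_atTop N] with n hn
      rw [indicator_of_mem hz, max_eq_right]
      have hpos : 0 < -β z := neg_pos.2 (hneg z hz)
      have : 1 ≤ n * -β z :=
        (inv_le_iff_one_le_mul₀ hpos).1 (hN.trans (Nat.cast_le.2 hn))
      linarith
    · simp only [indicator_of_notMem hz, tendsto_const_nhds]
  have hint : Tendsto (fun n : ℕ => ∫ θ in (0 : ℝ)..2 * Real.pi,
      S.indicator (fun z => max (n * β z + 1) 0) (circleMap c R θ)) atTop
      (𝓝 (∫ _ in (0 : ℝ)..2 * Real.pi, (0 : ℝ))) := by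
    refine intervalIntegral.tendsto_integral_filter_of_dominated_convergence (fun _ => 1)
      (.of_forall fun n => ?_) (.of_forall fun n => .of_forall fun θ _ => ?_)
      intervalIntegrable_const (.of_forall fun θ _ => hlim _)
    · exact ((measurable_indicator_max_const_mul_add_one hS hβ n.cast_nonneg).comp
        (continuous_circleMap c R).measurable).aestronglyMeasurable
    · obtain ⟨h0, h1⟩ := indicator_max_const_mul_add_one_mem_Icc (fun z hz => (hneg z hz).le)
        n.cast_nonneg (circleMap c R θ)
      rwa [Real.norm_of_nonneg h0]
  simpa [Real.circleAverage] using hint.const_mul (2 * Real.pi)⁻¹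

theorem LocBddSubharmonicOn.indicator_max_sub_harmonic {h P : ℂ → ℝ} {ρ : ℝ} (hρ : ρ ≠ 0)
    (hD : IsOpen D) (hh : LocBddSubharmonicOn h (U ∩ D)) (hU : closedBall w ρ ⊆ U)
    (hP : InnerProductSpace.HarmonicOnNhd P (ball w ρ))
    (hPbd : ∀ ζ ∈ sphere w ρ ∩ D, ∀ t < h ζ, ∀ᶠ z in 𝓝[ball w ρ] ζ, t < P z) :
    LocBddSubharmonicOn ((ball w ρ ∩ D).indicator fun z => max (h z - P z) 0) D := by
  have hV : IsOpen (ball w ρ ∩ D) := isOpen_ball.inter hD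
  have hVU : ball w ρ ∩ D ⊆ U ∩ D := inter_subset_inter_left D (ball_subset_closedBall.trans hU)
  refine ((hh.mono hVU).sub_harmonic hV (hP.mono inter_subset_left)).indicator_max_zero hV
    fun ζ hζ δ hδ => ?_
  have hζρ : ζ ∈ sphere w ρ ∩ D := by
    rw [← frontier_ball w hρ, ← frontier_inter_open_inter hD]
    exact hζ.symm
  have husc : ∀ᶠ z in 𝓝[ball w ρ ∩ D] ζ, h z < h ζ + δ / 2 :=
    (hh.upperSemicontinuousOn ζ ⟨hU (sphere_subset_closedBall hζρ.1), hζρ.2⟩).mono hVU _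
      (by linarith)
  have hmaj : ∀ᶠ z in 𝓝[ball w ρ ∩ D] ζ, h ζ - δ / 2 < P z :=
    nhdsWithin_mono ζ inter_subset_left (hPbd ζ hζρ _ (by linarith))
  filter_upwards [husc, hmaj] with z hz hPz
  linarith

/-- Since `β < 0`, the circle average of the positive part of `n β + 1` tends to `0`; so for large
`n` subtracting its harmonic majorant hardly changes `n β + 1` near `w`. -/
theorem exists_locBddSubharmonicOn_of_local_barrier (hD : IsOpen D) (hU : IsOpen U) (hw : w ∈ U)
    (hβ : LocBddSubharmonicOn β (U ∩ D)) (hneg : ∀ z ∈ U ∩ D, β z < 0)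
    (hlim : Tendsto β (𝓝[U ∩ D] w) (𝓝 0)) (hr : 0 < r) (hε : 0 < ε) :
    ∃ b : ℂ → ℝ, LocBddSubharmonicOn b D ∧ (∀ z, b z ∈ Icc 0 1) ∧ (∀ z ∉ ball w r, b z = 0) ∧
      ∀ᶠ z in 𝓝[D] w, 1 - ε < b z := by
  obtain ⟨ρ, hρ, hρsub⟩ := nhds_basis_closedBall.mem_iff.1
    (inter_mem (hU.mem_nhds hw) (ball_mem_nhds w hr))
  obtain ⟨hρU, hρr⟩ := subset_inter_iff.1 hρsub
  have hUD : IsOpen (U ∩ D) := hU.inter hD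
  have hneg' : ∀ z ∈ U ∩ D, β z ≤ 0 := fun z hz => (hneg z hz).le
  have husc := hβ.upperSemicontinuousOn
  obtain ⟨n, hn⟩ := ((tendsto_circleAverage_indicator_max_const_mul_add_one hUD.measurableSet husc
    hneg w ρ).eventually_lt_const (show 0 < ε / 4 by positivity)).exists
  obtain ⟨P, hP, hPw, hP0, hPbd⟩ := exists_harmonic_majorant hρ
    (measurable_indicator_max_const_mul_add_one hUD.measurableSet husc n.cast_nonneg)
    (fun ζ _ => indicator_max_const_mul_add_one_mem_Icc hneg' n.cast_nonneg ζ)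
    (show 0 < ε / 4 by positivity)
  refine ⟨_, (hβ.const_mul_add_const hUD n.cast_nonneg 1).indicator_max_sub_harmonic hρ.ne' hD hρU
    hP fun ζ hζ t ht => ?_, fun z => ⟨?_, ?_⟩, fun z hz => ?_, ?_⟩
  · refine hPbd ζ hζ.1 t (ht.trans_le ?_)
    rw [indicator_of_mem (mem_inter (hρU (sphere_subset_closedBall hζ.1)) hζ.2)]
    exact le_max_left _ _
  · exact indicator_nonneg (fun _ _ => le_max_right _ _) z
  · refine indicator_apply_le' (fun hz => max_le ?_ zero_le_one) fun _ => zero_le_one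
    have hβz := hneg' z ⟨hρU (ball_subset_closedBall hz.1), hz.2⟩
    linarith [mul_nonpos_of_nonneg_of_nonpos n.cast_nonneg hβz, hP0 z hz.1]
  · exact indicator_of_notMem (fun hzV => hz (hρr (ball_subset_closedBall hzV.1))) _
  · have hPnear : ∀ᶠ z in 𝓝 w, P z < 3 * ε / 4 :=
      (hP w (mem_ball_self hρ)).1.continuousAt.eventually_lt_const (by linarith)
    have hβnear : ∀ᶠ z in 𝓝[D] w, -(ε / 4) < n * β z := by
      rw [← nhdsWithin_inter_of_mem (nhdsWithin_le_nhds (hU.mem_nhds hw))]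
      exact (hlim.const_mul (n : ℝ)).eventually_const_lt (by linarith)
    filter_upwards [hβnear, nhdsWithin_le_nhds hPnear, nhdsWithin_le_nhds (ball_mem_nhds w hρ),
      self_mem_nhdsWithin] with z hβz hPz hzρ hzD
    rw [indicator_of_mem (mem_inter hzρ hzD)]
    exact lt_max_of_lt_left (by linarith)

theorem RegularBoundaryPt.exists_barrier (hreg : RegularBoundaryPt D w) (hD : IsOpen D)
    (hr : 0 < r) (hε : 0 < ε) :
    ∃ b : ℂ → ℝ, LocBddSubharmonicOn b D ∧ (∀ z, b z ∈ Icc 0 1) ∧ (∀ z ∉ ball w r, b z = 0) ∧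
      ∀ᶠ z in 𝓝[D] w, 1 - ε < b z := by
  obtain ⟨U, hU, hw, β, hβ, hneg, hlim⟩ := hreg.exists_locBddSubharmonicOn hD
  exact exists_locBddSubharmonicOn_of_local_barrier hD hU hw hβ hneg hlim hr hε

end Barrier

section GreenFunction

variable {D : Set ℂ} {h : ℂ → ℝ} {p : ℂ}

theorem log_enorm_sub_add_le_greenFn (hD : IsOpen D) (hp : p ∈ D)
    (hh : LocBddSubharmonicOn h D) (hneg : ∀ z ∈ D, ENNReal.log ‖z - p‖ₑ + (h z : EReal) < 0)
    (z : ℂ) : ENNReal.log ‖z - p‖ₑ + (h z : EReal) ≤ greenFn D p z := by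
  refine le_sSup ⟨_, hh.subharmonicOn_log_enorm_sub_add hD p, hneg, ⟨h p + 1, ?_⟩, rfl⟩
  have hbound : ∀ᶠ x in 𝓝 p, h x < h p + 1 := by
    rw [← hD.nhdsWithin_eq hp]
    exact hh.upperSemicontinuousOn p hp _ (lt_add_one _)
  filter_upwards [hbound] with x hx
  rcases eq_or_ne x p with rfl | hxp
  · simp
  · rw [log_enorm_sub_add_coe hxp, EReal.coe_le_coe_iff]
    gcongr

theorem ofReal_exp_le_azukawaOne {a : ℝ} (hD : IsOpen D) (hp : p ∈ D)
    (hh : LocBddSubharmonicOn h D) (hneg : ∀ z ∈ D, ENNReal.log ‖z - p‖ₑ + (h z : EReal) < 0)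
    (ha : ∀ᶠ z in 𝓝 p, a ≤ h z) : ENNReal.ofReal (Real.exp a) ≤ azukawaOne D p := by
  have htrans : Tendsto (fun lam : ℂ => p + lam) (𝓝[≠] 0) (𝓝 p) :=
    (Continuous.tendsto' (by fun_prop) 0 p (add_zero p)).mono_left nhdsWithin_le_nhds
  refine le_limsup_of_frequently_le (Eventually.frequently ?_) (by isBoundedDefault)
  filter_upwards [htrans.eventually ha, self_mem_nhdsWithin] with lam hlam hne
  have hnorm : ENNReal.ofReal ‖lam‖ ≠ 0 := by simpa using hne
  rw [ENNReal.le_div_iff_mul_le (.inl hnorm) (.inl ENNReal.ofReal_ne_top)]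
  calc ENNReal.ofReal (Real.exp a) * ENNReal.ofReal ‖lam‖
      = EReal.exp (ENNReal.log ‖lam‖ₑ + (a : EReal)) := by
        rw [EReal.exp_add, ENNReal.exp_log, EReal.exp_coe, ofReal_norm, mul_comm]
    _ ≤ EReal.exp (ENNReal.log ‖p + lam - p‖ₑ + (h (p + lam) : EReal)) := by
        rw [add_sub_cancel_left]
        exact EReal.exp_monotone (add_le_add_right (EReal.coe_le_coe_iff.2 hlam) _)
    _ ≤ EReal.exp (greenFn D p (p + lam)) :=
        EReal.exp_monotone (log_enorm_sub_add_le_greenFn hD hp hh hneg _)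

end GreenFunction

section Azukawa

variable {D : Set ℂ} {b : ℂ → ℝ} {p w : ℂ} {L R r : ℝ}

/-- Outside `ball w r` this holds because `b z = 0`, and inside because `‖z - p‖ < 2 * r` makes up
for the term `L * b z ≤ L`. -/
theorem log_enorm_sub_add_barrier_neg {z : ℂ} (hR : 0 < R) (hL : 0 ≤ L) (hb : ∀ z, b z ≤ 1)
    (hoff : ∀ z ∉ ball w r, b z = 0) (hp : p ∈ ball w r) (hr : 2 * r ≤ R * Real.exp (-L))
    (hz : dist z p < R) :
    ENNReal.log ‖z - p‖ₑ + ((L * b z + -Real.log R : ℝ) : EReal) < 0 := by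
  rcases eq_or_ne z p with rfl | hzp
  · simp
  have hpos : 0 < ‖z - p‖ := norm_pos_iff.2 (sub_ne_zero.2 hzp)
  rw [log_enorm_sub_add_coe hzp, EReal.coe_neg', ← dist_eq_norm]
  rw [← dist_eq_norm] at hpos
  by_cases hzw : z ∈ ball w r
  · have hdist : dist z p < R * Real.exp (-L) := by
      linarith [dist_triangle_right z p w, mem_ball.1 hzw, mem_ball.1 hp]
    have hlog := Real.log_lt_log hpos hdist
    rw [Real.log_mul hR.ne' (Real.exp_ne_zero _), Real.log_exp] at hlog
    have := mul_le_of_le_one_right hL (hb z)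
    linarith
  · have hlog := Real.log_lt_log hpos hz
    rw [hoff z hzw]
    linarith

theorem ofReal_exp_le_azukawaOne_of_barrier {t : ℝ} (hD : IsOpen D) (hb : LocBddSubharmonicOn b D)
    (hb1 : ∀ z, b z ≤ 1) (hoff : ∀ z ∉ ball w r, b z = 0) (hR : 0 < R) (hL : 0 ≤ L)
    (hr : 2 * r ≤ R * Real.exp (-L)) (hdist : ∀ z ∈ D, dist z p < R) (hpD : p ∈ D)
    (hpw : p ∈ ball w r) (ht : ∀ᶠ z in 𝓝 p, t ≤ b z) :
    ENNReal.ofReal (Real.exp (L * t) / R) ≤ azukawaOne D p := by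
  have hexp : Real.exp (L * t) / R = Real.exp (L * t + -Real.log R) := by
    rw [Real.exp_add, Real.exp_neg, Real.exp_log hR, div_eq_mul_inv]
  rw [hexp]
  refine ofReal_exp_le_azukawaOne hD hpD (hb.const_mul_add_const hD hL (-Real.log R))
    (fun z hz => log_enorm_sub_add_barrier_neg hR hL hb1 hoff hpw hr (hdist z hz)) ?_
  filter_upwards [ht] with z hz
  gcongr

theorem azukawa_tendsto_top_of_regular_general {D : Set ℂ} (hopen : IsOpen D)
    (hbd : Bornology.IsBounded D) {w : ℂ} (hreg : RegularBoundaryPt D w) :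
    Tendsto (fun p => azukawaOne D p) (𝓝[D] w) (𝓝 (⊤ : ℝ≥0∞)) := by
  obtain ⟨R, hR, hdiam⟩ : ∃ R > 0, ∀ z ∈ D, ∀ p ∈ D, dist z p < R :=
    ⟨diam D + 1, by positivity, fun z hz p hp =>
      (dist_le_diam_of_mem hbd hz hp).trans_lt (lt_add_one _)⟩
  refine ENNReal.tendsto_nhds_top fun n => ?_
  obtain ⟨L, hLn, hL⟩ : ∃ L : ℝ, n < Real.exp (L * (1 / 2)) / R ∧ 0 ≤ L := by
    have hlim : Tendsto (fun L : ℝ => Real.exp (L * (1 / 2)) / R) atTop atTop :=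
      (Real.tendsto_exp_atTop.comp (tendsto_id.atTop_mul_const one_half_pos)).atTop_div_const hR
    exact ((hlim.eventually_gt_atTop (n : ℝ)).and (eventually_ge_atTop 0)).exists
  have hr : 0 < R * Real.exp (-L) / 2 := by positivity
  obtain ⟨b, hb, hb01, hoff, hnear⟩ := hreg.exists_barrier hopen hr one_half_pos
  filter_upwards [eventually_eventually_nhdsWithin.2 hnear, self_mem_nhdsWithin,
    nhdsWithin_le_nhds (ball_mem_nhds w hr)] with p hp hpD hpw
  rw [hopen.nhdsWithin_eq hpD] at hp
  calc (n : ℝ≥0∞) = ENNReal.ofReal n := (ENNReal.ofReal_natCast n).symm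
    _ < ENNReal.ofReal (Real.exp (L * (1 / 2)) / R) :=
        (ENNReal.ofReal_lt_ofReal_iff (by positivity)).2 hLn
    _ ≤ azukawaOne D p :=
        ofReal_exp_le_azukawaOne_of_barrier hopen hb (fun z => (hb01 z).2) hoff hR hL
          (by linarith) (fun z hz => hdiam z hz p hpD) hpD hpw
          (hp.mono fun z hz => by linarith)

end Azukawa

/-- If `D ⊆ ℂ` is a bounded domain and `w ∈ ∂D` is a regular boundary point, then the
Azukawa metric blows up at `w`: `A_D(p;1) → ∞` as `D ∋ p → w`. -/
theorem azukawa_tendsto_top_of_regular (D : Set ℂ)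
    (hopen : IsOpen D) (hconn : IsConnected D) (hbd : Bornology.IsBounded D)
    (w : ℂ) (hw : w ∈ frontier D) (hreg : RegularBoundaryPt D w) :
    Tendsto (fun p => azukawaOne D p) (𝓝[D] w) (𝓝 (⊤ : ℝ≥0∞)) :=
  azukawa_tendsto_top_of_regular_general hopen hbd hreg
end

section
/- Let D be a bounded domain in ℂ^n, let P̃ be a polydisc such that D ∩ P̃ is connected and nonempty, and assume that for every f ∈ L²_h(D) there exists a bounded holomorphic function f̂ on P̃ with f̂ = f on D ∩ P̃. Then there is a constant C > 0 such that ‖f̂‖_{H^∞(P̃)} ≤ C ‖f‖_{L²(D)} for every f ∈ L²_h(D); in particular sup_{z ∈ P̃ ∩ D} K_D(z) ≤ C² < ∞. -/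
open MeasureTheory Filter Topology Metric Set
open scoped ENNReal NNReal

/-! Averaging the one-variable mean value property over the circles `θ ↦ z + e^{iθ} v` and
integrating over `v` in a ball bounds `|f(z)|` by the mean of `|f|` over that ball, hence by a
multiple of the `L^p` norm of `f`. Convergence in `L^p` of holomorphic functions is therefore
locally uniform, so `A^p(D)` is closed in `L^p(D)`, and the pairs `(f, g)` with `g` bounded and
holomorphic on `P` and equal to `f` on `D ∩ P` form a closed linear relation. When every `f`
extends, this relation projects onto the Banach space `A^p(D)`, and the open mapping theorem yields
an extension of norm at most `C ‖f‖`; by the identity theorem it is the only one. On `P ∩ D` the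
extension is `f` itself, whence `K_D ≤ C²`. -/

section HolomorphicFunctions

variable {E F : Type*} [NormedAddCommGroup E] [NormedSpace ℂ E] [NormedAddCommGroup F]
  [NormedSpace ℂ F]

lemma norm_fderiv_le_of_forall_ball_norm_le {f : E → F} {z : E} {R M : ℝ} (hR : 0 < R)
    (hf : DifferentiableOn ℂ f (ball z R)) (hM : ∀ w ∈ ball z R, ‖f w‖ ≤ M) :
    ‖fderiv ℂ f z‖ ≤ 2 * M / R := by
  refine Complex.norm_fderiv_le_div_of_mapsTo_ball hf (fun w hw => ?_) hR
  rw [mem_closedBall, dist_eq_norm]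
  linarith [norm_sub_le (f w) (f z), hM w hw, hM z (mem_ball_self hR)]

lemma uniformCauchySeqOn_fderiv {ι : Type*} {l : Filter ι} {f : ι → E → F} {U s : Set E} {R : ℝ}
    (hR : 0 < R) (hs : ∀ z ∈ s, ball z R ⊆ U) (hf : ∀ i, DifferentiableOn ℂ (f i) U)
    (hcauchy : UniformCauchySeqOn f l U) :
    UniformCauchySeqOn (fun i => fderiv ℂ (f i)) l s := by
  intro V hV
  obtain ⟨ε, hε, hεV⟩ := Metric.mem_uniformity_dist.1 hV
  filter_upwards [hcauchy _ (Metric.dist_mem_uniformity (by positivity : 0 < ε * R / 4))]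
    with ⟨i, j⟩ hij z hz
  have hdiff : ∀ k, DifferentiableAt ℂ (f k) z := fun k =>
    ((hf k).mono (hs z hz)).differentiableAt (ball_mem_nhds z hR)
  refine hεV ?_
  rw [dist_eq_norm, ← fderiv_sub (hdiff i) (hdiff j)]
  calc ‖fderiv ℂ (f i - f j) z‖ ≤ 2 * (ε * R / 4) / R :=
        norm_fderiv_le_of_forall_ball_norm_le hR (((hf i).sub (hf j)).mono (hs z hz))
          fun w hw => by simpa [dist_eq_norm] using (hij w (hs z hz hw)).le
    _ = ε / 2 := by field_simp; norm_num
    _ < ε := half_lt_self hε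

variable [CompleteSpace F]

lemma differentiableOn_of_tendstoUniformlyOn {ι : Type*} {l : Filter ι} [l.NeBot]
    {f : ι → E → F} {g : E → F} {U : Set E} (hU : IsOpen U)
    (hf : ∀ i, DifferentiableOn ℂ (f i) U) (hlim : TendstoUniformlyOn f g l U) :
    DifferentiableOn ℂ g U := by
  intro z hz
  obtain ⟨R, hR, hRU⟩ : ∃ R > 0, ∀ w ∈ ball z R, ball w R ⊆ U := by
    obtain ⟨ε, hε, hεU⟩ := Metric.isOpen_iff.1 hU z hz
    refine ⟨ε / 2, half_pos hε, fun w hw => (ball_subset_ball' ?_).trans hεU⟩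
    linarith [mem_ball.1 hw]
  have hmem : ∀ w ∈ ball z R, w ∈ U := fun w hw => hRU w hw (mem_ball_self hR)
  have hcauchy := uniformCauchySeqOn_fderiv hR hRU hf hlim.uniformCauchySeqOn
  have hconv : ∀ w ∈ ball z R, ∃ L, Tendsto (fun i => fderiv ℂ (f i) w) l (𝓝 L) :=
    fun w hw => cauchy_map_iff_exists_tendsto.1 (hcauchy.cauchy_map hw)
  choose! g' hg' using hconv
  have hderiv : HasFDerivAt g (g' z) z :=
    hasFDerivAt_of_tendstoUniformlyOn isOpen_ball (hcauchy.tendstoUniformlyOn_of_tendsto hg')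
      (fun i w hw => ((hf i).differentiableAt (hU.mem_nhds (hmem w hw))).hasFDerivAt)
      (fun w hw => hlim.tendsto_at (hmem w hw)) (mem_ball_self hR)
  exact hderiv.differentiableAt.differentiableWithinAt

lemma exists_differentiableOn_tendsto_of_locally_uniformCauchySeqOn {ι : Type*} {l : Filter ι}
    [l.NeBot] {f : ι → E → F} {U : Set E} (hf : ∀ i, DifferentiableOn ℂ (f i) U)
    (hcauchy : ∀ z ∈ U, ∃ R > 0, ball z R ⊆ U ∧ UniformCauchySeqOn f l (ball z R)) :
    ∃ g : E → F, DifferentiableOn ℂ g U ∧ ∀ z ∈ U, Tendsto (fun i => f i z) l (𝓝 (g z)) := by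
  have hconv : ∀ z ∈ U, ∃ y, Tendsto (fun i => f i z) l (𝓝 y) := fun z hz => by
    obtain ⟨R, hR, -, hc⟩ := hcauchy z hz
    exact cauchy_map_iff_exists_tendsto.1 (hc.cauchy_map (mem_ball_self hR))
  choose! g hg using hconv
  refine ⟨g, fun z hz => ?_, hg⟩
  obtain ⟨R, hR, hRU, hc⟩ := hcauchy z hz
  have hunif := hc.tendstoUniformlyOn_of_tendsto fun w hw => hg w (hRU hw)
  exact ((differentiableOn_of_tendstoUniformlyOn isOpen_ball (fun i => (hf i).mono hRU)
    hunif).differentiableAt (ball_mem_nhds z hR)).differentiableWithinAt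

-- On the complex line through `w` and `z` this is the identity theorem in one variable.
lemma eqOn_of_convex_of_eventuallyEq {U : Set E} (hU : IsOpen U) (hconvex : Convex ℝ U)
    {f g : E → F} (hf : DifferentiableOn ℂ f U) (hg : DifferentiableOn ℂ g U) {w : E}
    (hw : w ∈ U) (hfg : f =ᶠ[𝓝 w] g) : EqOn f g U := by
  intro z hz
  let line : ℂ → E := fun t => w + t • (z - w)
  have hline : Differentiable ℂ line := by fun_prop
  have hopen : IsOpen (line ⁻¹' U) := hU.preimage hline.continuous
  have hpre : IsPreconnected (line ⁻¹' U) :=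
    ((hconvex.translate_preimage_right w).linear_preimage
      ((LinearMap.toSpanSingleton ℂ E (z - w)).restrictScalars ℝ)).isPreconnected
  have hanalytic {h : E → F} (hh : DifferentiableOn ℂ h U) :
      AnalyticOnNhd ℂ (h ∘ line) (line ⁻¹' U) :=
    (hh.comp hline.differentiableOn fun _ ht => ht).analyticOnNhd hopen
  have hzero : line 0 = w := by simp [line]
  have hone : line 1 = z := by simp [line]
  have hnear : f ∘ line =ᶠ[𝓝 0] g ∘ line :=
    hfg.comp_tendsto (hzero ▸ hline.continuous.tendsto 0)
  have heq : EqOn (f ∘ line) (g ∘ line) (line ⁻¹' U) :=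
    (hanalytic hf).eqOn_of_preconnected_of_eventuallyEq (hanalytic hg) hpre
      (by rwa [mem_preimage, hzero]) hnear
  simpa only [Function.comp_apply, hone] using heq (x := 1) (by rwa [mem_preimage, hone])

lemma eqOn_of_isPreconnected_of_eventuallyEq {U : Set E} (hU : IsOpen U) (hpre : IsPreconnected U)
    {f g : E → F} (hf : DifferentiableOn ℂ f U) (hg : DifferentiableOn ℂ g U) {w : E}
    (hw : w ∈ U) (hfg : f =ᶠ[𝓝 w] g) : EqOn f g U := by
  have hsub : U ⊆ {z | f =ᶠ[𝓝 z] g} := by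
    refine hpre.subset_of_closure_inter_subset isOpen_setOfPred_eventually_nhds ⟨w, hw, hfg⟩ ?_
    rintro z ⟨hzcl, hzU⟩
    obtain ⟨ε, hε, hεU⟩ := Metric.isOpen_iff.1 hU z hzU
    obtain ⟨y, hy, hyz⟩ := Metric.mem_closure_iff.1 hzcl ε hε
    have heq := eqOn_of_convex_of_eventuallyEq isOpen_ball (convex_ball z ε) (hf.mono hεU)
      (hg.mono hεU) (mem_ball'.2 hyz) hy
    exact heq.eventuallyEq_of_mem (ball_mem_nhds z hε)
  exact fun z hz => (hsub hz).self_of_nhds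

lemma ofReal_two_pi_mul_enorm_le_lintegral_circleMap {f : ℂ → F} {c : ℂ} {R : ℝ}
    (hf : DiffContOnCl ℂ f (ball c |R|)) :
    ENNReal.ofReal (2 * Real.pi) * ‖f c‖ₑ ≤
      ∫⁻ θ in Ioc 0 (2 * Real.pi), ‖f (circleMap c R θ)‖ₑ := by
  have hmean : (2 * Real.pi) • f c = ∫ θ in Ioc 0 (2 * Real.pi), f (circleMap c R θ) := by
    rw [← hf.circleAverage, Real.circleAverage_def, smul_inv_smul₀ Real.two_pi_pos.ne',
      intervalIntegral.integral_of_le Real.two_pi_pos.le]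
  calc ENNReal.ofReal (2 * Real.pi) * ‖f c‖ₑ = ‖(2 * Real.pi) • f c‖ₑ := by
        rw [enorm_smul, Real.enorm_of_nonneg Real.two_pi_pos.le]
    _ ≤ ∫⁻ θ in Ioc 0 (2 * Real.pi), ‖f (circleMap c R θ)‖ₑ :=
        hmean ▸ enorm_integral_le_lintegral_enorm _

end HolomorphicFunctions

section MeanValueInequality

lemma measurePreserving_linearIsometryEquiv {E : Type*} [NormedAddCommGroup E] [NormedSpace ℝ E]
    [FiniteDimensional ℝ E] [MeasurableSpace E] [BorelSpace E] (μ : Measure E)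
    [μ.IsAddHaarMeasure] (e : E ≃ₗᵢ[ℝ] E) : MeasurePreserving e μ μ := by
  have : ProperSpace E := FiniteDimensional.proper ℝ E
  have hdet : LinearMap.det (e.toLinearEquiv : E →ₗ[ℝ] E) ≠ 0 :=
    (LinearEquiv.isUnit_det' e.toLinearEquiv).ne_zero
  have hpre : ∀ s, μ (e ⁻¹' s) =
      ENNReal.ofReal |(LinearMap.det (e.toLinearEquiv : E →ₗ[ℝ] E))⁻¹| * μ s :=
    Measure.addHaar_preimage_linearMap μ hdet
  have hscale : ENNReal.ofReal |(LinearMap.det (e.toLinearEquiv : E →ₗ[ℝ] E))⁻¹| = 1 := by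
    have hball : e ⁻¹' ball 0 1 = ball 0 1 := by simp
    have hunit := hpre (ball 0 1)
    rw [hball] at hunit
    exact (ENNReal.mul_eq_right (measure_ball_pos μ 0 one_pos).ne'
      measure_ball_lt_top.ne).1 hunit.symm
  refine ⟨e.continuous.measurable, Measure.ext fun s hs => ?_⟩
  rw [Measure.map_apply e.continuous.measurable hs, hpre, hscale, one_mul]

variable {E F : Type*} [NormedAddCommGroup E] [NormedSpace ℂ E] [NormedAddCommGroup F]

lemma add_circleMap_smul_mem_ball {z v : E} {r : ℝ} (hv : v ∈ ball 0 r) (θ : ℝ) :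
    z + circleMap 0 1 θ • v ∈ ball z r := by
  simpa [norm_smul] using hv

variable [MeasurableSpace E] {μ : Measure E}

lemma aemeasurable_enorm_comp_add_circleMap_smul [OpensMeasurableSpace E]
    [SecondCountableTopology E] [SFinite μ] {f : E → F} {z : E} {r : ℝ}
    (hf : ContinuousOn f (ball z r)) :
    AEMeasurable (fun x : E × ℝ => ‖f (z + circleMap 0 1 x.2 • x.1)‖ₑ)
      ((μ.restrict (ball 0 r)).prod (volume.restrict (Ioc 0 (2 * Real.pi)))) := by
  have hmap : Continuous fun x : E × ℝ => z + circleMap 0 1 x.2 • x.1 := by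
    have := continuous_circleMap 0 1
    fun_prop
  have hcont : ContinuousOn (fun x : E × ℝ => ‖f (z + circleMap 0 1 x.2 • x.1)‖ₑ)
      (ball 0 r ×ˢ Ioc 0 (2 * Real.pi)) :=
    continuous_enorm.comp_continuousOn
      (hf.comp hmap.continuousOn fun x hx => add_circleMap_smul_mem_ball hx.1 x.2)
  rw [Measure.prod_restrict]
  exact hcont.aemeasurable (measurableSet_ball.prod measurableSet_Ioc)

variable [FiniteDimensional ℂ E] [BorelSpace E] [μ.IsAddHaarMeasure]

lemma setLIntegral_ball_comp_add_smul {a : ℂ} (ha : ‖a‖ = 1) (z : E) (r : ℝ) (h : E → ℝ≥0∞) :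
    ∫⁻ v in ball 0 r, h (z + a • v) ∂μ = ∫⁻ w in ball z r, h w ∂μ := by
  have ha0 : a ≠ 0 := norm_ne_zero_iff.1 (ha ▸ one_ne_zero)
  have : FiniteDimensional ℝ E := FiniteDimensional.complexToReal E
  let rotate : E ≃ₗᵢ[ℝ] E :=
    { (LinearEquiv.smulOfNeZero ℂ E a ha0).restrictScalars ℝ with
      norm_map' := fun v => by
        change ‖a • v‖ = ‖v‖
        rw [norm_smul, ha, one_mul] }
  have hpres : MeasurePreserving (fun v => z + rotate v) μ μ :=
    (measurePreserving_add_left μ z).comp (measurePreserving_linearIsometryEquiv μ rotate)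
  have hemb : MeasurableEmbedding (fun v => z + rotate v) :=
    (rotate.toHomeomorph.trans (Homeomorph.addLeft z)).measurableEmbedding
  have hball : (fun v => z + rotate v) ⁻¹' ball z r = ball 0 r := by
    ext v; simp
  have hsubst := hpres.setLIntegral_comp_preimage_emb hemb h (ball z r)
  rwa [hball] at hsubst

variable [NormedSpace ℂ F] [CompleteSpace F]

lemma enorm_mul_measure_ball_le_setLIntegral {f : E → F} {z : E} {r : ℝ}
    (hf : DifferentiableOn ℂ f (ball z r)) :
    ‖f z‖ₑ * μ (ball z r) ≤ ∫⁻ w in ball z r, ‖f w‖ₑ ∂μ := by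
  have hcircle : ∀ v ∈ ball (0 : E) r, ENNReal.ofReal (2 * Real.pi) * ‖f z‖ₑ ≤
      ∫⁻ θ in Ioc 0 (2 * Real.pi), ‖f (z + circleMap 0 1 θ • v)‖ₑ := fun v hv => by
    have hmaps : MapsTo (fun t : ℂ => z + t • v) (closure (ball 0 |1|)) (ball z r) := by
      intro t ht
      rw [abs_one, closure_ball _ one_ne_zero, mem_closedBall_zero_iff] at ht
      rw [mem_ball_zero_iff] at hv
      simpa [norm_smul] using (mul_le_of_le_one_left (norm_nonneg v) ht).trans_lt hv
    simpa using ofReal_two_pi_mul_enorm_le_lintegral_circleMap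
      (hf.comp (by fun_prop) hmaps).diffContOnCl
  have : ProperSpace E := FiniteDimensional.proper ℂ E
  have htwo_pi : ENNReal.ofReal (2 * Real.pi) ≠ 0 := by simp [Real.pi_pos]
  rw [← ENNReal.mul_le_mul_iff_right htwo_pi ENNReal.ofReal_ne_top]
  calc ENNReal.ofReal (2 * Real.pi) * (‖f z‖ₑ * μ (ball z r))
      = ∫⁻ _ in ball (0 : E) r, ENNReal.ofReal (2 * Real.pi) * ‖f z‖ₑ ∂μ := by
        rw [setLIntegral_const, Measure.addHaar_ball_center, mul_assoc]
    _ ≤ ∫⁻ v in ball (0 : E) r, (∫⁻ θ in Ioc 0 (2 * Real.pi),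
          ‖f (z + circleMap 0 1 θ • v)‖ₑ) ∂μ := setLIntegral_mono' measurableSet_ball hcircle
    _ = ∫⁻ θ in Ioc 0 (2 * Real.pi), ∫⁻ v in ball (0 : E) r,
          ‖f (z + circleMap 0 1 θ • v)‖ₑ ∂μ :=
        lintegral_lintegral_swap (aemeasurable_enorm_comp_add_circleMap_smul hf.continuousOn)
    _ = ∫⁻ _ in Ioc 0 (2 * Real.pi), ∫⁻ w in ball z r, ‖f w‖ₑ ∂μ := by
        have hunit : ∀ θ : ℝ, ‖circleMap 0 1 θ‖ = 1 := by simp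
        exact lintegral_congr fun θ =>
          setLIntegral_ball_comp_add_smul (hunit θ) z r fun w => ‖f w‖ₑ
    _ = ENNReal.ofReal (2 * Real.pi) * ∫⁻ w in ball z r, ‖f w‖ₑ ∂μ := by
        rw [setLIntegral_const, Real.volume_Ioc, sub_zero, mul_comm]

lemma enorm_mul_measure_ball_rpow_le_eLpNorm {p : ℝ≥0∞} (hp : 1 ≤ p) {f : E → F} {z : E} {r : ℝ}
    (hr : 0 < r) (hf : DifferentiableOn ℂ f (ball z r)) :
    ‖f z‖ₑ * μ (ball z r) ^ (1 / p.toReal) ≤ eLpNorm f p (μ.restrict (ball z r)) := by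
  have : ProperSpace E := FiniteDimensional.proper ℂ E
  have hpos : μ (ball z r) ≠ 0 := (measure_ball_pos μ z hr).ne'
  have hfin : μ (ball z r) ≠ ⊤ := measure_ball_lt_top.ne
  rw [← ENNReal.mul_le_mul_iff_left
    (ENNReal.rpow_pos (p := 1 - 1 / p.toReal) hpos.bot_lt hfin).ne'
    (ENNReal.rpow_ne_top_of_nonneg' hpos.bot_lt hfin)]
  calc ‖f z‖ₑ * μ (ball z r) ^ (1 / p.toReal) * μ (ball z r) ^ (1 - 1 / p.toReal)
      = ‖f z‖ₑ * μ (ball z r) := by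
        rw [mul_assoc, ← ENNReal.rpow_add _ _ hpos hfin, add_sub_cancel, ENNReal.rpow_one]
    _ ≤ eLpNorm f 1 (μ.restrict (ball z r)) := by
        rw [eLpNorm_one_eq_lintegral_enorm]
        exact enorm_mul_measure_ball_le_setLIntegral hf
    _ ≤ eLpNorm f p (μ.restrict (ball z r)) * μ (ball z r) ^ (1 - 1 / p.toReal) := by
        simpa using eLpNorm_le_eLpNorm_mul_rpow_measure_univ hp
          (hf.continuousOn.aestronglyMeasurable measurableSet_ball)

end MeanValueInequality

section ExtensionRelation

variable {E : Type*} [NormedAddCommGroup E] [NormedSpace ℂ E] [MeasurableSpace E]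

/-- The Bergman space `A^p(D)`: the classes in `L^p(D)` that have a representative holomorphic
on `D`. -/
def bergmanSpace (F : Type*) [NormedAddCommGroup F] [NormedSpace ℂ F] (p : ℝ≥0∞) (μ : Measure E)
    (D : Set E) : Submodule ℂ (Lp F p (μ.restrict D)) where
  carrier := {u | ∃ f, DifferentiableOn ℂ f D ∧ u =ᵐ[μ.restrict D] f}
  zero_mem' := ⟨0, differentiableOn_const 0, Lp.coeFn_zero _ _ _⟩
  add_mem' := by
    rintro u v ⟨f, hf, hu⟩ ⟨g, hg, hv⟩
    exact ⟨f + g, hf.add hg, (Lp.coeFn_add _ _).trans (hu.add hv)⟩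
  smul_mem' := by
    rintro c u ⟨f, hf, hu⟩
    exact ⟨c • f, hf.const_smul c, (Lp.coeFn_smul _ _).trans (hu.const_smul c)⟩

/-- The graph of the extension operator, as a linear relation: the pairs of a class in `A^p(D)`
with holomorphic representative `f` and a bounded holomorphic function on `P` which agrees with `f`
on `D ∩ P`. The space `H^∞(P)` is realized inside the bounded continuous functions on `P`. -/
def extensionRelation (F : Type*) [NormedAddCommGroup F] [NormedSpace ℂ F] (p : ℝ≥0∞)
    (μ : Measure E) (D P : Set E) :
    Submodule ℂ (Lp F p (μ.restrict D) × BoundedContinuousFunction P F) where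
  carrier := {x | ∃ f g, DifferentiableOn ℂ f D ∧ x.1 =ᵐ[μ.restrict D] f ∧
    DifferentiableOn ℂ g P ∧ (∀ z : P, x.2 z = g z) ∧ EqOn g f (D ∩ P)}
  zero_mem' := ⟨0, 0, differentiableOn_const 0, Lp.coeFn_zero _ _ _, differentiableOn_const 0,
    fun _ => rfl, fun _ _ => rfl⟩
  add_mem' := by
    rintro x y ⟨f, g, hf, hxf, hg, hxg, hfg⟩ ⟨f', g', hf', hyf', hg', hyg', hfg'⟩
    exact ⟨f + f', g + g', hf.add hf', (Lp.coeFn_add _ _).trans (hxf.add hyf'), hg.add hg',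
      fun z => by simp [hxg z, hyg' z], fun z hz => by simp [hfg hz, hfg' hz]⟩
  smul_mem' := by
    rintro c x ⟨f, g, hf, hxf, hg, hxg, hfg⟩
    exact ⟨c • f, c • g, hf.const_smul c, (Lp.coeFn_smul _ _).trans (hxf.const_smul c),
      hg.const_smul c, fun z => by simp [hxg z], fun z hz => by simp [hfg hz]⟩

variable {F : Type*} [NormedAddCommGroup F] [NormedSpace ℂ F] {p : ℝ≥0∞} {μ : Measure E}
  {D P : Set E}

lemma map_fst_extensionRelation (hext : ∀ f : E → F, DifferentiableOn ℂ f D →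
      MemLp f p (μ.restrict D) → ∃ g : E → F, DifferentiableOn ℂ g P ∧
        (∃ M : ℝ, ∀ z ∈ P, ‖g z‖ ≤ M) ∧ EqOn g f (D ∩ P)) :
    (extensionRelation F p μ D P).map (LinearMap.fst ℂ _ _) = bergmanSpace F p μ D := by
  refine le_antisymm ?_ ?_
  · rintro - ⟨x, ⟨f, -, hf, hxf, -⟩, rfl⟩
    exact ⟨f, hf, hxf⟩
  · rintro u ⟨f, hf, huf⟩
    obtain ⟨g, hg, ⟨M, hM⟩, hgf⟩ := hext f hf ((memLp_congr_ae huf).1 (Lp.memLp u))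
    let h : BoundedContinuousFunction P F := BoundedContinuousFunction.ofNormedAddCommGroup
      (P.domRestrict g) hg.continuousOn.domRestrict M fun z => hM z z.2
    exact ⟨(u, h), ⟨f, g, hf, huf, hg, fun _ => rfl, hgf⟩, rfl⟩

variable [Fact (1 ≤ p)] [FiniteDimensional ℂ E] [BorelSpace E] [μ.IsAddHaarMeasure]
  [CompleteSpace F]

lemma uniformCauchySeqOn_of_cauchySeq_Lp {u : ℕ → Lp F p (μ.restrict D)} {f : ℕ → E → F}
    {s : Set E} {R : ℝ} (hR : 0 < R) (hs : ∀ z ∈ s, ball z R ⊆ D)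
    (hf : ∀ k, DifferentiableOn ℂ (f k) D) (huf : ∀ k, u k =ᵐ[μ.restrict D] f k)
    (hu : CauchySeq u) : UniformCauchySeqOn f atTop s := by
  have : ProperSpace E := FiniteDimensional.proper ℂ E
  have hpos : 0 < μ (ball 0 R) ^ (1 / p.toReal) :=
    ENNReal.rpow_pos (measure_ball_pos μ 0 hR) measure_ball_lt_top.ne
  have hbound : ∀ k l, ∀ z ∈ s,
      edist (f k z) (f l z) * μ (ball 0 R) ^ (1 / p.toReal) ≤ edist (u k) (u l) := by
    intro k l z hz
    have hsub : DifferentiableOn ℂ (f k - f l) D := (hf k).sub (hf l)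
    calc edist (f k z) (f l z) * μ (ball 0 R) ^ (1 / p.toReal)
        = ‖(f k - f l) z‖ₑ * μ (ball z R) ^ (1 / p.toReal) := by
          rw [Measure.addHaar_ball_center μ z, edist_eq_enorm_sub, Pi.sub_apply]
      _ ≤ eLpNorm (f k - f l) p (μ.restrict (ball z R)) :=
          enorm_mul_measure_ball_rpow_le_eLpNorm Fact.out hR (hsub.mono (hs z hz))
      _ ≤ eLpNorm (f k - f l) p (μ.restrict D) :=
          eLpNorm_mono_measure _ (Measure.restrict_mono_set μ (hs z hz))
      _ = edist (u k) (u l) := by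
          rw [Lp.edist_def]
          exact (eLpNorm_congr_ae ((huf k).sub (huf l))).symm
  intro V hV
  obtain ⟨ε, hε, hεV⟩ := mem_uniformity_edist.1 hV
  have hclose : ∀ᶠ i : ℕ × ℕ in atTop ×ˢ atTop,
      edist (u i.1) (u i.2) < ε * μ (ball 0 R) ^ (1 / p.toReal) := by
    rw [prod_atTop_atTop_eq]
    exact cauchySeq_iff_tendsto.1 hu (edist_mem_uniformity (ENNReal.mul_pos hε.ne' hpos.ne'))
  filter_upwards [hclose] with ⟨k, l⟩ hkl z hz
  exact hεV (lt_of_mul_lt_mul_right ((hbound k l z hz).trans_lt hkl) zero_le)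

lemma exists_differentiableOn_tendsto_of_tendsto_Lp (hD : IsOpen D)
    {u : ℕ → Lp F p (μ.restrict D)} {v : Lp F p (μ.restrict D)} (hu : Tendsto u atTop (𝓝 v))
    {f : ℕ → E → F} (hf : ∀ k, DifferentiableOn ℂ (f k) D)
    (huf : ∀ k, u k =ᵐ[μ.restrict D] f k) :
    ∃ g : E → F, DifferentiableOn ℂ g D ∧ v =ᵐ[μ.restrict D] g ∧
      ∀ z ∈ D, Tendsto (fun k => f k z) atTop (𝓝 (g z)) := by
  have hcauchy : ∀ z ∈ D, ∃ R > 0, ball z R ⊆ D ∧ UniformCauchySeqOn f atTop (ball z R) := by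
    intro z hz
    obtain ⟨ε, hε, hεD⟩ := Metric.isOpen_iff.1 hD z hz
    have hball : ∀ w ∈ ball z (ε / 2), ball w (ε / 2) ⊆ D := fun w hw =>
      (ball_subset_ball' (by linarith [mem_ball.1 hw])).trans hεD
    exact ⟨ε / 2, half_pos hε, hball z (mem_ball_self (half_pos hε)),
      uniformCauchySeqOn_of_cauchySeq_Lp (half_pos hε) hball hf huf hu.cauchySeq⟩
  obtain ⟨g, hg, hlim⟩ := exists_differentiableOn_tendsto_of_locally_uniformCauchySeqOn hf hcauchy
  refine ⟨g, hg, ?_, hlim⟩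
  obtain ⟨ns, hns, hae⟩ := (tendstoInMeasure_of_tendsto_Lp hu).exists_seq_tendsto_ae
  filter_upwards [hae, ae_all_iff.2 huf, ae_restrict_mem hD.measurableSet] with z hz huz hzD
  simp only [huz] at hz
  exact tendsto_nhds_unique hz ((hlim z hzD).comp hns.tendsto_atTop)

lemma isClosed_bergmanSpace (hD : IsOpen D) :
    IsClosed (bergmanSpace F p μ D : Set (Lp F p (μ.restrict D))) := by
  refine IsSeqClosed.isClosed fun u v hu huv => ?_
  choose f hf huf using hu
  obtain ⟨g, hg, hvg, -⟩ := exists_differentiableOn_tendsto_of_tendsto_Lp hD huv hf huf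
  exact ⟨g, hg, hvg⟩

lemma isClosed_extensionRelation (hD : IsOpen D) (hP : IsOpen P) :
    IsClosed (extensionRelation F p μ D P :
      Set (Lp F p (μ.restrict D) × BoundedContinuousFunction P F)) := by
  refine IsSeqClosed.isClosed fun x y hx hxy => ?_
  choose f g hf hxf hg hxg hgf using hx
  obtain ⟨f', hf', hyf', hflim⟩ :=
    exists_differentiableOn_tendsto_of_tendsto_Lp hD ((continuous_fst.tendsto y).comp hxy) hf hxf
  let g' : E → F := Function.extend Subtype.val y.2 0
  have hyg' : ∀ z : P, y.2 z = g' z := fun z =>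
    (Subtype.val_injective.extend_apply y.2 0 z).symm
  have hunif : TendstoUniformlyOn g g' atTop P := by
    rw [tendstoUniformlyOn_iff_tendstoUniformly_comp_coe]
    have hsnd := BoundedContinuousFunction.tendsto_iff_tendstoUniformly.1
      ((continuous_snd.tendsto y).comp hxy)
    convert hsnd using 1
    · ext k z; exact (hxg k z).symm
    · ext z; exact (hyg' z).symm
  refine ⟨f', g', hf', hyf', differentiableOn_of_tendstoUniformlyOn hP hg hunif, hyg',
    fun z hz => ?_⟩
  exact tendsto_nhds_unique (hunif.tendsto_at hz.2)
    ((hflim z hz.1).congr fun k => (hgf k hz).symm)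

end ExtensionRelation

lemma exists_norm_le_of_isClosed_of_isClosed_map_fst {𝕜 X Y : Type*} [NontriviallyNormedField 𝕜]
    [NormedAddCommGroup X] [NormedSpace 𝕜 X] [CompleteSpace X] [NormedAddCommGroup Y]
    [NormedSpace 𝕜 Y] [CompleteSpace Y] {R : Submodule 𝕜 (X × Y)}
    (hR : IsClosed (R : Set (X × Y)))
    (hdom : IsClosed (R.map (LinearMap.fst 𝕜 X Y) : Set X)) :
    ∃ C > 0, ∀ x ∈ R.map (LinearMap.fst 𝕜 X Y), ∃ y, (x, y) ∈ R ∧ ‖y‖ ≤ C * ‖x‖ := by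
  have : CompleteSpace R := hR.completeSpace_coe
  have : CompleteSpace (R.map (LinearMap.fst 𝕜 X Y)) := hdom.completeSpace_coe
  let proj : R →L[𝕜] R.map (LinearMap.fst 𝕜 X Y) :=
    ((ContinuousLinearMap.fst 𝕜 X Y).comp R.subtypeL).codRestrict _
      fun q => Submodule.mem_map_of_mem q.2
  have hproj : Function.Surjective proj := by
    rintro ⟨-, q, hq, rfl⟩
    exact ⟨⟨q, hq⟩, rfl⟩
  obtain ⟨C, hC, hpreimage⟩ := proj.exists_preimage_norm_le hproj
  refine ⟨C, hC, fun x hx => ?_⟩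
  obtain ⟨⟨q, hq⟩, hqx, hnorm⟩ := hpreimage ⟨x, hx⟩
  obtain rfl : q.1 = x := congrArg Subtype.val hqx
  exact ⟨q.2, hq, (norm_snd_le q).trans hnorm⟩

section BoundedExtension

variable {E : Type*} [NormedAddCommGroup E] [NormedSpace ℂ E]

theorem exists_forall_norm_le_mul_eLpNorm_of_forall_exists_extension {F : Type*}
    [NormedAddCommGroup F] [NormedSpace ℂ F] [CompleteSpace F] [FiniteDimensional ℂ E]
    [MeasurableSpace E] [BorelSpace E] {μ : Measure E} [μ.IsAddHaarMeasure] {p : ℝ≥0∞}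
    [Fact (1 ≤ p)] {D P : Set E} (hD : IsOpen D) (hP : IsOpen P) (hpre : IsPreconnected P)
    (hDP : (D ∩ P).Nonempty)
    (hext : ∀ f : E → F, DifferentiableOn ℂ f D → MemLp f p (μ.restrict D) →
      ∃ g : E → F, DifferentiableOn ℂ g P ∧ (∃ M : ℝ, ∀ z ∈ P, ‖g z‖ ≤ M) ∧ EqOn g f (D ∩ P)) :
    ∃ C > 0, ∀ f : E → F, DifferentiableOn ℂ f D → MemLp f p (μ.restrict D) →
      ∀ g : E → F, DifferentiableOn ℂ g P → EqOn g f (D ∩ P) →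
        ∀ z ∈ P, ‖g z‖ ≤ C * (eLpNorm f p (μ.restrict D)).toReal := by
  have hdom := map_fst_extensionRelation hext
  obtain ⟨C, hC, hbound⟩ := exists_norm_le_of_isClosed_of_isClosed_map_fst
    (isClosed_extensionRelation (p := p) (μ := μ) (F := F) hD hP)
    (hdom ▸ isClosed_bergmanSpace hD)
  refine ⟨C, hC, fun f hf hfp g hg hgf z hz => ?_⟩
  obtain ⟨h, ⟨f', g', hf', hff'ae, hg', hhg', hgf'⟩, hnorm⟩ :=
    hbound (hfp.toLp f) (hdom ▸ ⟨f, hf, hfp.coeFn_toLp⟩)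
  have hff' : EqOn f f' D := Measure.eqOn_open_of_ae_eq (hfp.coeFn_toLp.symm.trans hff'ae) hD
    hf.continuousOn hf'.continuousOn
  obtain ⟨w, hw⟩ := hDP
  have hnear : g =ᶠ[𝓝 w] g' := by
    filter_upwards [(hD.inter hP).mem_nhds hw] with v hv
    rw [hgf hv, hgf' hv, hff' hv.1]
  have hgg' : EqOn g g' P := eqOn_of_isPreconnected_of_eventuallyEq hP hpre hg hg' hw.2 hnear
  calc ‖g z‖ = ‖h ⟨z, hz⟩‖ := by rw [hgg' hz, hhg' ⟨z, hz⟩]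
    _ ≤ ‖h‖ := h.norm_coe_le_norm _
    _ ≤ C * ‖hfp.toLp f‖ := hnorm
    _ = C * (eLpNorm f p (μ.restrict D)).toReal := by rw [Lp.norm_toLp]

lemma lintegral_nnnorm_sq_eq_eLpNorm_sq {X F : Type*} [MeasurableSpace X] [NormedAddCommGroup F]
    (μ : Measure X) (f : X → F) :
    ∫⁻ x, (‖f x‖₊ : ℝ≥0∞) ^ 2 ∂μ = eLpNorm f 2 μ ^ 2 := by
  simpa [enorm_eq_nnnorm] using
    (eLpNorm_nnreal_pow_eq_lintegral (f := f) (μ := μ) (p := 2) two_ne_zero).symm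

lemma sqrt_toReal_lintegral_nnnorm_sq {X F : Type*} [MeasurableSpace X] [NormedAddCommGroup F]
    (μ : Measure X) (f : X → F) :
    √(∫⁻ x, (‖f x‖₊ : ℝ≥0∞) ^ 2 ∂μ).toReal = (eLpNorm f 2 μ).toReal := by
  rw [lintegral_nnnorm_sq_eq_eLpNorm_sq, ENNReal.toReal_pow, Real.sqrt_sq ENNReal.toReal_nonneg]

variable [MeasureSpace E]

lemma mem_L2h_iff [OpensMeasurableSpace E] [SecondCountableTopology E] {Ω : Set E}
    (hΩ : IsOpen Ω) {f : E → ℂ} :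
    f ∈ L2h Ω ↔ DifferentiableOn ℂ f Ω ∧ MemLp f 2 (volume.restrict Ω) := by
  refine and_congr_right fun hf => ?_
  rw [lintegral_nnnorm_sq_eq_eLpNorm_sq, ENNReal.pow_lt_top_iff, MemLp,
    and_iff_right (hf.continuousOn.aestronglyMeasurable hΩ.measurableSet)]
  simp

lemma bergmanKernel_le_of_forall_norm_le {Ω : Set E} {z : E} {C : ℝ}
    (hbound : ∀ f ∈ L2h Ω, ‖f z‖ ≤ C * √(∫⁻ w in Ω, (‖f w‖₊ : ℝ≥0∞) ^ 2).toReal) :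
    bergmanKernel Ω z ≤ ENNReal.ofReal (C ^ 2) := by
  refine iSup_le fun f => iSup_le fun hf => iSup_le fun _ => ENNReal.div_le_of_le_mul ?_
  calc (‖f z‖₊ : ℝ≥0∞) ^ 2 = ENNReal.ofReal (‖f z‖ ^ 2) := by
        rw [ENNReal.ofReal_pow (norm_nonneg _), ofReal_norm, enorm_eq_nnnorm]
    _ ≤ ENNReal.ofReal (C ^ 2 * (∫⁻ w in Ω, (‖f w‖₊ : ℝ≥0∞) ^ 2).toReal) := by
        refine ENNReal.ofReal_le_ofReal ?_
        rw [← Real.sq_sqrt ENNReal.toReal_nonneg, ← mul_pow]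
        exact pow_le_pow_left₀ (norm_nonneg _) (hbound f hf) 2
    _ = ENNReal.ofReal (C ^ 2) * ∫⁻ w in Ω, (‖f w‖₊ : ℝ≥0∞) ^ 2 := by
        rw [ENNReal.ofReal_mul (sq_nonneg C), ENNReal.ofReal_toReal hf.2.ne]

theorem bounded_extension_operator_general [FiniteDimensional ℂ E] [BorelSpace E]
    [(volume : Measure E).IsAddHaarMeasure] {D P : Set E} (hD : IsOpen D) (hP : IsOpen P)
    (hpre : IsPreconnected P) (hDP : (D ∩ P).Nonempty)
    (hext : ∀ f ∈ L2h D, ∃ g : E → ℂ, DifferentiableOn ℂ g P ∧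
      (∃ M : ℝ, ∀ z ∈ P, ‖g z‖ ≤ M) ∧ EqOn g f (D ∩ P)) :
    ∃ C > (0 : ℝ),
      (∀ f ∈ L2h D, ∀ g : E → ℂ, DifferentiableOn ℂ g P → EqOn g f (D ∩ P) →
        ∀ z ∈ P, ‖g z‖ ≤ C * √(∫⁻ w in D, (‖f w‖₊ : ℝ≥0∞) ^ 2).toReal) ∧
      ∀ z ∈ P ∩ D, bergmanKernel D z ≤ ENNReal.ofReal (C ^ 2) := by
  have : ProperSpace E := FiniteDimensional.proper ℂ E
  obtain ⟨C, hC, hbound⟩ := exists_forall_norm_le_mul_eLpNorm_of_forall_exists_extension (p := 2)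
    hD hP hpre hDP fun f hf hfp => hext f ((mem_L2h_iff hD).2 ⟨hf, hfp⟩)
  have hL2 : ∀ f ∈ L2h D, ∀ g : E → ℂ, DifferentiableOn ℂ g P → EqOn g f (D ∩ P) →
      ∀ z ∈ P, ‖g z‖ ≤ C * √(∫⁻ w in D, (‖f w‖₊ : ℝ≥0∞) ^ 2).toReal := fun f hf => by
    rw [sqrt_toReal_lintegral_nnnorm_sq]
    exact hbound f ((mem_L2h_iff hD).1 hf).1 ((mem_L2h_iff hD).1 hf).2
  refine ⟨C, hC, hL2, fun z hz => bergmanKernel_le_of_forall_norm_le fun f hf => ?_⟩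
  obtain ⟨g, hg, -, hgf⟩ := hext f hf
  exact hgf ⟨hz.2, hz.1⟩ ▸ hL2 f hf g hg hgf z hz.1

end BoundedExtension

lemma polydisc_eq_pi_ball {n : ℕ} (c : Fin n → ℂ) (r : Fin n → ℝ) :
    polydisc c r = univ.pi fun i => ball (c i) (r i) := by
  ext z
  simp [polydisc, dist_eq_norm]

lemma isOpen_polydisc {n : ℕ} (c : Fin n → ℂ) (r : Fin n → ℝ) : IsOpen (polydisc c r) :=
  polydisc_eq_pi_ball c r ▸ isOpen_set_pi finite_univ fun _ _ => isOpen_ball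

lemma convex_polydisc {n : ℕ} (c : Fin n → ℂ) (r : Fin n → ℝ) : Convex ℝ (polydisc c r) :=
  polydisc_eq_pi_ball c r ▸ convex_pi fun _ _ => convex_ball _ _

/-- If every `f ∈ L²ₕ(D)` extends to a bounded holomorphic function on a polydisc `P̃` (with
`D ∩ P̃` connected and nonempty, so the extension is uniquely determined), then the extension
operator is bounded: there is `C > 0` with `‖f̂‖_{H^∞(P̃)} ≤ C ‖f‖_{L²(D)}`; in particular
`K_D ≤ C²` on `P̃ ∩ D`. -/
theorem bounded_extension_operator {n : ℕ} (D : Set (Fin n → ℂ))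
    (hopen : IsOpen D) (hconn : IsConnected D) (hbd : Bornology.IsBounded D)
    (c' : Fin n → ℂ) (r' : Fin n → ℝ) (hr' : ∀ i, 0 < r' i)
    (hDP : IsConnected (D ∩ polydisc c' r'))
    (hext : ∀ f ∈ L2h D, ∃ g : (Fin n → ℂ) → ℂ, DifferentiableOn ℂ g (polydisc c' r') ∧
      (∃ M : ℝ, ∀ z ∈ polydisc c' r', ‖g z‖ ≤ M) ∧ Set.EqOn g f (D ∩ polydisc c' r')) :
    ∃ C > (0 : ℝ),
      (∀ f ∈ L2h D, ∀ g : (Fin n → ℂ) → ℂ, DifferentiableOn ℂ g (polydisc c' r') →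
        Set.EqOn g f (D ∩ polydisc c' r') →
        ∀ z ∈ polydisc c' r',
          ‖g z‖ ≤ C * Real.sqrt ((∫⁻ w in D, (‖f w‖₊ : ℝ≥0∞) ^ 2).toReal)) ∧
      ∀ z ∈ polydisc c' r' ∩ D, bergmanKernel D z ≤ ENNReal.ofReal (C ^ 2) :=
  bounded_extension_operator_general hopen (isOpen_polydisc c' r')
    (convex_polydisc c' r').isPreconnected hDP.nonempty hext
end
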